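/- Let q be a prime power and n, k positive integers with 3 ≤ k and 4k ≤ n. Let λ ∈ 𝔽_{q^n} with λ ≠ 0, φ(X) = Σ_{j=1}^{k−1} α_j X^{q^j} with α_j ∈ 𝔽_{q^n}, and f(X) = X + φ(X) + λ·X^{q^k}. Then there exist nonzero x, y ∈ 𝔽_{q^n} with y/x ∉ 𝔽_q and f(x)·y^q = f(y)·x^q; in particular, f is not scattered of index 1. -/

import Mathlib

/-!
A pair `(x, t * x)` with `t ^ q ≠ t` solves `f x * y ^ q = f y * x ^ q` exactly when
`x * (t ^ q - t) = ∑ i ∈ Icc 2 k, f_i * (t ^ (q ^ i) - t ^ q) * x ^ (q ^ i)`, where the `f_i` are the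
coefficients of `f`; the coefficient of `X ^ q` cancels. Taking `q`-th roots, `f_i = φ_i ^ q`, and
substituting `x * s = ζ⁻¹ ^ q` with `s = t ^ q - t` turns this into the equation `OnCurve` of a plane
curve in `t` and `ζ`, of degree `q ^ k - 1` in `ζ` and additive in `1 / ζ`. The
theorem follows once this curve has a point with coordinates in the field with `q ^ n` elements
(`core`, `exists_solution`).

The existence of such a point is proved by a Stepanov-type argument. Suppose that there is none.
Functions on the curve are written in the basis `s ^ ⌈j / q⌉ * ζ ^ j`, `j < q ^ k - 1`, and carry a
weight `wt`, which measures poles at infinity and does not grow under reduction to normal form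
(`nf_exists`). Let `A` be the difference quotient of the equation in its second coordinate, a kernel
on the fibre square of the curve that vanishes off the diagonal (`hatA_offdiag`) but not on it
(`hatA_diag`). Factor `q ^ n = r' * r` with `r = q ^ (2 * k)`; thus `r ≤ r'` because `4 * k ≤ n`.
For a function `c` on the curve with coefficients `φ ^ r'`, consider the function
`P ↦ c (P ^ r') * A (P, P ^ (r' * r))` of points `P` of the curve over `t = t ^ (q ^ n)`, powers being
taken coordinatewise. It vanishes, as `P ^ (q ^ n) ≠ P` by assumption and both lie over `t`. Expanding
`c * A` into sections modulo `r`-th powers (`aa_expansion`) shows that it agrees at these points with a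
function `Φ = ∑ g ^ r' * a_g` in which the `a_g` have small weight. Choosing `c ≠ 0` so that the terms
of the largest weight drop out (`exists_aux`), the weight of `Φ` is too small for it to vanish at so
many points, since the points of each fibre separate the coordinates (`vanish`). So `Φ = 0`.

On a formal branch of the curve truncated modulo `(T - t) ^ r'`, the `r'`-th powers `g ^ r'` are
constants (`exists_jet`). Hence for each branch the combination of the `a_g` with the corresponding
constant coefficients vanishes to order `r'`, more than its weight allows for a nonzero function on an
irreducible curve (`eq_zero_of_jet`, `gen_irreducible`). The combination is therefore zero, and its
value on the diagonal is a nonzero multiple of `c` at the given point, because there `A` is a nonzero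
derivative. Thus `c` vanishes at almost all points, and `c = 0`, a contradiction.
-/

namespace Scat

open Polynomial Finset

/-! ### Weighted degrees -/

section PB
variable {K : Type} [Field K]

/-- `PB d p w`: every monomial `T ^ n` of `p` satisfies `d * n ≤ w`; that is, `p` has weighted
degree at most `w` when the variable has weight `d`. The zero polynomial satisfies this for
every `w`, also for negative `w`. -/
def PB (d : ℕ) (p : K[X]) (w : ℤ) : Prop := ∀ n, p.coeff n ≠ 0 → (d : ℤ) * n ≤ w

variable {d : ℕ} {p p' : K[X]} {w w' : ℤ}

lemma PB.mono (h : PB d p w) (hw : w ≤ w') : PB d p w' := fun n hn => (h n hn).trans hw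

lemma PB.zero : PB d (0 : K[X]) w := fun n hn => by simp at hn

lemma PB.add (h : PB d p w) (h' : PB d p' w) : PB d (p + p') w := by
  intro n hn
  rw [coeff_add] at hn
  by_cases h0 : p.coeff n = 0
  · rw [h0, zero_add] at hn; exact h' n hn
  · exact h n h0

lemma PB.neg (h : PB d p w) : PB d (-p) w := by
  intro n hn
  rw [coeff_neg, neg_ne_zero] at hn
  exact h n hn

lemma PB.sub (h : PB d p w) (h' : PB d p' w) : PB d (p - p') w := by
  rw [sub_eq_add_neg]; exact h.add h'.neg

lemma PB.sum {ι : Type*} (s : Finset ι) (g : ι → K[X]) (h : ∀ i ∈ s, PB d (g i) w) :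
    PB d (∑ i ∈ s, g i) w := by
  classical
  induction s using Finset.induction_on with
  | empty => simpa using PB.zero
  | insert a s ha ih =>
    rw [Finset.sum_insert ha]
    exact (h a (by simp)).add (ih fun i hi => h i (by simp [hi]))

lemma PB.mul (h : PB d p w) (h' : PB d p' w') : PB d (p * p') (w + w') := by
  intro n hn
  rw [coeff_mul] at hn
  obtain ⟨⟨a, b⟩, hab, h1⟩ := Finset.exists_ne_zero_of_sum_ne_zero hn
  rw [HasAntidiagonal.mem_antidiagonal] at hab
  have ha := h a (left_ne_zero_of_mul h1)
  have hb := h' b (right_ne_zero_of_mul h1)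
  simp only at hab
  subst hab
  push_cast
  linarith

lemma PB.C (a : K) (hw : 0 ≤ w) : PB d (C a) w := by
  intro n hn
  rw [coeff_C] at hn
  split_ifs at hn with h0
  · subst h0; simpa using hw
  · exact absurd rfl hn

lemma PB.one (hw : 0 ≤ w) : PB d (1 : K[X]) w := PB.C 1 hw

lemma PB.pow (h : PB d p w) (n : ℕ) : PB d (p ^ n) (n * w) := by
  induction n with
  | zero => simpa using PB.one le_rfl
  | succ n ih =>
    rw [pow_succ]
    refine (ih.mul h).mono (le_of_eq ?_)
    push_cast; ring

lemma PB.Xpow (n : ℕ) (hw : (d : ℤ) * n ≤ w) : PB d (X ^ n : K[X]) w := by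
  intro m hm
  rw [coeff_X_pow] at hm
  split_ifs at hm with h0
  · subst h0; exact hw
  · exact absurd rfl hm

lemma PB.of_natDegree (h : (d : ℤ) * p.natDegree ≤ w) : PB d p w := by
  intro n hn
  have := le_natDegree_of_ne_zero hn
  refine le_trans ?_ h
  gcongr

lemma PB.natDegree (h : PB d p w) (hp : p ≠ 0) : (d : ℤ) * p.natDegree ≤ w :=
  h _ (by simpa using hp)

lemma PB.prod {ι : Type*} (s : Finset ι) (g : ι → K[X]) (w : ι → ℤ)
    (h : ∀ i ∈ s, PB d (g i) (w i)) : PB d (∏ i ∈ s, g i) (∑ i ∈ s, w i) := by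
  classical
  induction s using Finset.induction_on with
  | empty => simpa using PB.one le_rfl
  | insert a s ha ih =>
    rw [Finset.sum_insert ha, Finset.prod_insert ha]
    exact (h a (by simp)).mul (ih fun i hi => h i (by simp [hi]))

lemma PB.eq_zero (h : PB d p w) (hw : w < 0) : p = 0 := by
  by_contra h0
  have := h.natDegree h0
  have h1 : (0 : ℤ) ≤ d * p.natDegree := by positivity
  omega

end PB

/-! ### The exponents and weights -/

/-- `mm q N = ⌈N / q⌉`. -/
def mm (q N : ℕ) : ℕ := (N + q - 1) / q

/-- The weight of the function `s ^ ⌈N / q⌉ * ζ ^ N`, in the normalisation where the variable of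
the base line has weight `q ^ k - 1`; it measures the pole order at infinity on the curve. -/
def wt (q k N : ℕ) : ℤ := (q ^ k - 1) * (q * mm q N) - N * (q ^ k - q ^ (k - 1))

section num
variable {q : ℕ} (hq : 2 ≤ q)
include hq

lemma mm_le (N : ℕ) : N ≤ q * mm q N := by
  unfold mm
  have h1 := Nat.div_add_mod (N + q - 1) q
  have h2 := Nat.mod_lt (N + q - 1) (show 0 < q by omega)
  omega

lemma mm_lt (N : ℕ) : q * mm q N < N + q := by
  unfold mm
  have h1 := Nat.div_add_mod (N + q - 1) q
  omega

lemma mm_unique {N m : ℕ} (h1 : N ≤ q * m) (h2 : q * m < N + q) : mm q N = m := by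
  have h3 := mm_le hq N
  have h4 := mm_lt hq N
  by_contra hne
  rcases lt_or_gt_of_ne hne with h | h
  · have : q * (mm q N + 1) ≤ q * m := by gcongr; omega
    rw [mul_add] at this; omega
  · have : q * (m + 1) ≤ q * mm q N := by gcongr; omega
    rw [mul_add] at this; omega

lemma mm_mono {N N' : ℕ} (h : N ≤ N') : mm q N ≤ mm q N' := by
  unfold mm
  apply Nat.div_le_div_right
  omega

lemma mm_zero : mm q 0 = 0 := mm_unique hq (by omega) (by omega)

lemma mm_add_le (M N : ℕ) : mm q (M + N) ≤ mm q M + mm q N := by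
  have h1 := mm_le hq M
  have h2 := mm_le hq N
  have h4 := mm_lt hq (M + N)
  have : q * mm q (M + N) < q * (mm q M + mm q N + 1) := by
    rw [mul_add, mul_add]; omega
  have := Nat.lt_of_mul_lt_mul_left this
  omega

lemma mm_mul_le (r N : ℕ) : mm q (r * N) ≤ r * mm q N := by
  have h1 := mm_le hq N
  have h4 := mm_lt hq (r * N)
  have h5 : r * N ≤ r * (q * mm q N) := by gcongr
  have : q * mm q (r * N) < q * (r * mm q N + 1) := by
    have : q * (r * mm q N + 1) = r * (q * mm q N) + q := by ring
    omega
  have := Nat.lt_of_mul_lt_mul_left this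
  omega

lemma mm_sub_one (z : ℕ) (hz : 1 ≤ z) : mm q (q * z - 1) = z := by
  have : q * 1 ≤ q * z := by gcongr
  apply mm_unique hq <;> omega

end num

section curve
variable {K : Type} [Field K]

/-- The polynomial `s = T ^ q - T`. -/
noncomputable def ss (K : Type) [Field K] (q : ℕ) : K[X] := X ^ q - X

/-- The polynomial `h i = ∑ a < i, s ^ (q ^ a - 1)`; in characteristic dividing `q` one has
`s * h i = T ^ (q ^ i) - T`. -/
noncomputable def hh (K : Type) [Field K] (q i : ℕ) : K[X] := ∑ a ∈ range i, ss K q ^ (q ^ a - 1)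

/-- `(ψ, ζ)` is a point, with values in `B`, of the curve attached to the coefficients
`φ 2, …, φ k`. The curve is the affine plane curve
`y = ∑ φ i * (T ^ (q ^ (i - 1)) - T) * s ^ (-q ^ (i - 1)) * y ^ (q ^ i)`
in the coordinates `T` and `ζ = 1 / y`, with denominators cleared. -/
def OnCurve {B : Type} [CommRing B] (q k : ℕ) (φ : ℕ → K) (ψ : K[X] →+* B) (ζ : B) : Prop :=
  ψ (ss K q) ^ (q ^ (k - 1) - 1) * ζ ^ (q ^ k - 1) =
    ∑ i ∈ Icc 2 k, ψ (C (φ i) * hh K q (i - 1)) * ψ (ss K q) ^ (q ^ (k - 1) - q ^ (i - 1)) *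
      ζ ^ (q ^ k - q ^ i)

/-- The value at the point `(ψ, ζ)` of the function `∑ v j * s ^ ⌈j / q⌉ * ζ ^ j` with coordinate
vector `v`. -/
noncomputable def ev {B : Type} [CommRing B] (q k : ℕ) (ψ : K[X] →+* B) (ζ : B)
    (v : ℕ → K[X]) : B :=
  ∑ j ∈ range (q ^ k - 1), ψ (v j) * ψ (ss K q) ^ mm q j * ζ ^ j

/-- The function with coordinate vector `v` has weight at most `w`. -/
def Bd (q k : ℕ) (v : ℕ → K[X]) (w : ℤ) : Prop :=
  ∀ j < q ^ k - 1, PB (q ^ k - 1) (v j) (w - wt q k j)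

lemma PB_ss {q : ℕ} (hq : 2 ≤ q) (d : ℕ) : PB d (ss K q) (d * q) := by
  unfold ss
  refine (PB.Xpow q le_rfl).sub ?_
  have := PB.Xpow (K := K) (d := d) (w := d * q) 1 (by gcongr; omega)
  simpa using this

lemma PB_hh {q : ℕ} (hq : 2 ≤ q) (d i : ℕ) :
    PB d (hh K q i) (d * (q ^ i - q)) := by
  unfold hh
  refine PB.sum _ _ fun a ha => ?_
  rw [mem_range] at ha
  refine ((PB_ss hq d).pow _).mono ?_
  have h1 : 1 ≤ q ^ a := Nat.one_le_pow _ _ (by omega)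
  have h2 : q ^ (a + 1) ≤ q ^ i := Nat.pow_le_pow_right (by omega) (by omega)
  push_cast [h1]
  have h3 : (q : ℤ) ^ a * q ≤ q ^ i := by rw [← pow_succ]; exact_mod_cast h2
  nlinarith [Int.natCast_nonneg d]

lemma dd_cast {q k : ℕ} (hq : 2 ≤ q) : ((q ^ k - 1 : ℕ) : ℤ) = (q : ℤ) ^ k - 1 := by
  have h1 : 1 ≤ q ^ k := Nat.one_le_pow _ _ (by omega)
  push_cast [h1]; ring

lemma wt_nonneg {q k : ℕ} (hq : 2 ≤ q) (N : ℕ) : 0 ≤ wt q k N := by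
  unfold wt
  have h1 : (N : ℤ) ≤ q * mm q N := by exact_mod_cast mm_le hq N
  have h2 : (1 : ℤ) ≤ q ^ k := by exact_mod_cast Nat.one_le_pow _ _ (by omega)
  have h3 : (1 : ℤ) ≤ q ^ (k - 1) := by exact_mod_cast Nat.one_le_pow _ _ (by omega)
  nlinarith [Int.natCast_nonneg N]

end curve

section nf
variable {K : Type} [Field K] {q k : ℕ}

/-- Each step of the reduction to normal form lowers the exponent of `ζ` by `q ^ i - 1`, and the
power of `s` in the equation makes up for the change of `⌈N / q⌉`. -/
lemma mm_step (hq : 2 ≤ q) {i N : ℕ} (hi : 1 ≤ i) (hN : q ^ i - 1 ≤ N) :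
    mm q (N - (q ^ i - 1)) + q ^ (i - 1) - 1 + (if q ∣ N then 0 else 1) = mm q N := by
  obtain ⟨z, hz⟩ : ∃ z, z = q ^ (i - 1) := ⟨_, rfl⟩
  have hqz : q ^ i = q * z := by
    rw [hz, ← pow_succ']; congr 1; omega
  have hz1 : 1 ≤ z := by rw [hz]; exact Nat.one_le_pow _ _ (by omega)
  rw [hqz] at hN ⊢
  rw [← hz]
  have hqz1 : q * 1 ≤ q * z := by gcongr
  have h3 := Nat.div_add_mod N q
  have h4 := Nat.mod_lt N (show 0 < q by omega)
  have hle : z ≤ N / q + 1 := by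
    have : q * z < q * (N / q + 1 + 1) := by rw [mul_add, mul_add]; omega
    have := Nat.lt_of_mul_lt_mul_left this
    omega
  obtain ⟨c, hc⟩ := Nat.exists_eq_add_of_le hle
  have e1 : q * (N / q) + q = q * z + q * c := by
    have := congrArg (q * ·) hc
    simp only [mul_add] at this; omega
  have hA : mm q (N - (q * z - 1)) = c := by
    apply mm_unique hq <;> omega
  rw [hA]
  split_ifs with hd
  · have h0 : N % q = 0 := Nat.mod_eq_zero_of_dvd hd
    have : mm q N = N / q := by apply mm_unique hq <;> omega
    omega
  · have h0 : N % q ≠ 0 := fun h => hd (Nat.dvd_of_mod_eq_zero h)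
    have : mm q N = N / q + 1 := by apply mm_unique hq <;> rw [mul_add] <;> omega
    omega

/-- Reduction to normal form: the equation of the curve expresses `s ^ ⌈N / q⌉ * ζ ^ N`, for any
`N`, through the `s ^ ⌈j / q⌉ * ζ ^ j` with `j < q ^ k - 1`, without increasing the weight. -/
lemma nf_exists (hq : 2 ≤ q) (hk : 2 ≤ k) (φ : ℕ → K) (N : ℕ) : ∃ v : ℕ → K[X],
    Bd q k v (wt q k N) ∧
    ∀ (B : Type) [CommRing B] (ψ : K[X] →+* B) (ζ : B), OnCurve q k φ ψ ζ →
      ψ (ss K q) ^ mm q N * ζ ^ N = ev q k ψ ζ v := by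
  induction N using Nat.strong_induction_on with
  | _ N ih =>
  by_cases hN : N < q ^ k - 1
  · refine ⟨fun j => if j = N then 1 else 0, ?_, ?_⟩
    · intro j hj
      simp only
      split_ifs with h
      · subst h; exact PB.one (by simp)
      · exact PB.zero
    · intro B _ ψ ζ _
      unfold ev
      rw [Finset.sum_eq_single N]
      · simp
      · intro j _ hj; simp [hj]
      · intro h; exact absurd (mem_range.2 hN) h
  push Not at hN
  have hpos : ∀ i, 1 ≤ q ^ i := fun i => Nat.one_le_pow _ _ (by omega)
  have hlt : ∀ i ∈ Icc 2 k, N - (q ^ i - 1) < N := by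
    intro i hi
    rw [mem_Icc] at hi
    have : q ^ 1 ≤ q ^ i := Nat.pow_le_pow_right (by omega) (by omega)
    rw [pow_one] at this
    have : q ^ i ≤ q ^ k := Nat.pow_le_pow_right (by omega) (by omega)
    omega
  choose! v hv hev using ih
  have hYk : q ^ k = q * q ^ (k - 1) := by rw [← pow_succ']; congr 1; omega
  refine ⟨fun j => ∑ i ∈ Icc 2 k, C (φ i) * hh K q (i - 1) *
    ss K q ^ (if q ∣ N then 0 else 1) * v (N - (q ^ i - 1)) j, ?_, ?_⟩
  · intro j hj
    refine PB.sum _ _ fun i hi => ?_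
    have h1 := hv _ (hlt i hi) j hj
    rw [mem_Icc] at hi
    have hik : q ^ i ≤ q ^ k := Nat.pow_le_pow_right (by omega) (by omega)
    have hik' : q ^ (i - 1) ≤ q ^ (k - 1) := Nat.pow_le_pow_right (by omega) (by omega)
    have hiq : q ^ i = q * q ^ (i - 1) := by rw [← pow_succ']; congr 1; omega
    refine ((((PB.C (φ i) (le_refl 0)).mul (PB_hh hq _ (i - 1))).mul
      ((PB_ss hq _).pow _)).mul h1).mono ?_
    have h2 := mm_step hq (i := i) (N := N) (by omega) (by omega)
    obtain ⟨ε, hε⟩ : ∃ ε, ε = if q ∣ N then 0 else 1 := ⟨_, rfl⟩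
    rw [← hε] at h2 ⊢
    unfold wt
    have h4 : (mm q N : ℤ) = mm q (N - (q ^ i - 1)) + q ^ (i - 1) - 1 + ε := by
      have := hpos (i - 1)
      push_cast [← h2, Nat.cast_sub (show 1 ≤ mm q (N - (q ^ i - 1)) + q ^ (i - 1) by omega)]
      ring
    rw [dd_cast hq, h4]
    have h5 : ((N - (q ^ i - 1) : ℕ) : ℤ) = N - (q * q ^ (i - 1) - 1) := by
      have := hpos i
      rw [Nat.cast_sub (by omega), dd_cast hq, show (q : ℤ) ^ i = q * q ^ (i - 1) by exact_mod_cast hiq]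
    rw [h5]
    have hYk' : (q : ℤ) ^ k = q * q ^ (k - 1) := by exact_mod_cast hYk
    rw [hYk']
    have hz : (q : ℤ) ^ (i - 1) ≤ q ^ (k - 1) := by exact_mod_cast hik'
    have hq' : (2 : ℤ) ≤ q := by exact_mod_cast hq
    nlinarith [mul_nonneg (sub_nonneg.2 hz) (show (0 : ℤ) ≤ q - 1 by linarith)]
  · intro B _ ψ ζ hc
    have hmN : q ^ (k - 1) ≤ mm q N := by
      have h1 := mm_sub_one hq (q ^ (k - 1)) (hpos _)
      rw [← h1, ← hYk]; exact mm_mono hq hN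
    have e1 : ψ (ss K q) ^ mm q N * ζ ^ N =
        ψ (ss K q) ^ (mm q N - (q ^ (k - 1) - 1)) * ζ ^ (N - (q ^ k - 1)) *
          (ψ (ss K q) ^ (q ^ (k - 1) - 1) * ζ ^ (q ^ k - 1)) := by
      rw [mul_mul_mul_comm, ← pow_add, ← pow_add]
      congr 2 <;> omega
    rw [e1, hc, mul_sum]
    unfold ev
    simp only [map_sum, sum_mul]
    rw [sum_comm]
    refine sum_congr rfl fun i hi => ?_
    have h1 := hev _ (hlt i hi) B ψ ζ hc
    rw [mem_Icc] at hi
    have hik : q ^ i ≤ q ^ k := Nat.pow_le_pow_right (by omega) (by omega)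
    have hik' : q ^ (i - 1) ≤ q ^ (k - 1) := Nat.pow_le_pow_right (by omega) (by omega)
    have h2 := mm_step hq (i := i) (N := N) (by omega) (by omega)
    obtain ⟨ε, hε⟩ : ∃ ε, ε = if q ∣ N then 0 else 1 := ⟨_, rfl⟩
    rw [← hε] at h2 ⊢
    have e2 : ψ (ss K q) ^ (mm q N - (q ^ (k - 1) - 1)) * ζ ^ (N - (q ^ k - 1)) *
        (ψ (C (φ i) * hh K q (i - 1)) * ψ (ss K q) ^ (q ^ (k - 1) - q ^ (i - 1)) *
          ζ ^ (q ^ k - q ^ i)) = ψ (C (φ i) * hh K q (i - 1)) * ψ (ss K q) ^ ε *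
          (ψ (ss K q) ^ mm q (N - (q ^ i - 1)) * ζ ^ (N - (q ^ i - 1))) := by
      have a1 : mm q N - (q ^ (k - 1) - 1) + (q ^ (k - 1) - q ^ (i - 1)) =
          ε + mm q (N - (q ^ i - 1)) := by
        have := hpos (i - 1); have := hpos (k - 1); omega
      have a2 : N - (q ^ k - 1) + (q ^ k - q ^ i) = N - (q ^ i - 1) := by
        have := hpos i; omega
      calc _ = ψ (C (φ i) * hh K q (i - 1)) *
            (ψ (ss K q) ^ (mm q N - (q ^ (k - 1) - 1)) *
              ψ (ss K q) ^ (q ^ (k - 1) - q ^ (i - 1))) *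
            (ζ ^ (N - (q ^ k - 1)) * ζ ^ (q ^ k - q ^ i)) := by ring
        _ = _ := by rw [← pow_add, ← pow_add, a1, a2, pow_add]; ring
    rw [e2, h1]
    unfold ev
    rw [mul_sum]
    refine sum_congr rfl fun j _ => ?_
    simp only [map_mul, map_pow]
    ring

/-- The coordinate vector of `s ^ ⌈N / q⌉ * ζ ^ N`. -/
noncomputable def nf (q k : ℕ) (φ : ℕ → K) (N : ℕ) : ℕ → K[X] :=
  open Classical in
  if h : 2 ≤ q ∧ 2 ≤ k then (nf_exists h.1 h.2 φ N).choose else 0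

lemma nf_Bd (hq : 2 ≤ q) (hk : 2 ≤ k) (φ : ℕ → K) (N : ℕ) : Bd q k (nf q k φ N) (wt q k N) := by
  unfold nf; rw [dif_pos ⟨hq, hk⟩]; exact (nf_exists hq hk φ N).choose_spec.1

lemma nf_ev (hq : 2 ≤ q) (hk : 2 ≤ k) {φ : ℕ → K} (N : ℕ) {B : Type} [CommRing B]
    {ψ : K[X] →+* B} {ζ : B} (hc : OnCurve q k φ ψ ζ) :
    ev q k ψ ζ (nf q k φ N) = ψ (ss K q) ^ mm q N * ζ ^ N := by
  unfold nf; rw [dif_pos ⟨hq, hk⟩]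
  exact ((nf_exists hq hk φ N).choose_spec.2 B ψ ζ hc).symm

/-- The coordinate vector of the product of the function with vector `c` by `s ^ M * ζ ^ N`,
where `M` is at least `⌈N / q⌉`. -/
noncomputable def mulmono (q k : ℕ) (φ : ℕ → K) (c : ℕ → K[X]) (M N : ℕ) : ℕ → K[X] :=
  fun j => ∑ i ∈ range (q ^ k - 1),
    c i * ss K q ^ (mm q i + M - mm q (i + N)) * nf q k φ (i + N) j

lemma mulmono_Bd (hq : 2 ≤ q) (hk : 2 ≤ k) (φ : ℕ → K) {c : ℕ → K[X]} {M N : ℕ} {w : ℤ}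
    (hM : mm q N ≤ M) (hc : Bd q k c w) :
    Bd q k (mulmono q k φ c M N)
      (w + (q ^ k - 1) * (q * M) - N * (q ^ k - q ^ (k - 1))) := by
  intro j hj
  unfold mulmono
  refine PB.sum _ _ fun i hi => ?_
  rw [mem_range] at hi
  refine (((hc i hi).mul ((PB_ss hq _).pow _)).mul (nf_Bd hq hk φ (i + N) j hj)).mono ?_
  have h1 : mm q (i + N) ≤ mm q i + M := (mm_add_le hq i N).trans (by omega)
  rw [dd_cast hq, Nat.cast_sub h1]
  unfold wt
  push_cast
  apply le_of_eq
  ring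

lemma mulmono_ev (hq : 2 ≤ q) (hk : 2 ≤ k) {φ : ℕ → K} (c : ℕ → K[X]) {M N : ℕ}
    (hM : mm q N ≤ M) {B : Type} [CommRing B] {ψ : K[X] →+* B} {ζ : B}
    (hc : OnCurve q k φ ψ ζ) :
    ev q k ψ ζ (mulmono q k φ c M N) = ev q k ψ ζ c * (ψ (ss K q) ^ M * ζ ^ N) := by
  have e1 : ev q k ψ ζ (mulmono q k φ c M N) = ∑ i ∈ range (q ^ k - 1),
      ψ (c i) * ψ (ss K q) ^ (mm q i + M - mm q (i + N)) * ev q k ψ ζ (nf q k φ (i + N)) := by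
    unfold mulmono ev
    simp only [map_sum, sum_mul, mul_sum]
    rw [sum_comm]
    refine sum_congr rfl fun i _ => sum_congr rfl fun j _ => ?_
    simp only [map_mul, map_pow]
    ring
  rw [e1]
  conv_rhs => unfold ev
  rw [sum_mul]
  refine sum_congr rfl fun i _ => ?_
  rw [nf_ev hq hk _ hc]
  have h1 : mm q (i + N) ≤ mm q i + M := (mm_add_le hq i N).trans (by omega)
  calc _ = ψ (c i) * (ψ (ss K q) ^ (mm q i + M - mm q (i + N)) * ψ (ss K q) ^ mm q (i + N)) *
        ζ ^ (i + N) := by ring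
    _ = _ := by rw [← pow_add, Nat.sub_add_cancel h1, pow_add, pow_add]; ring

lemma ev_add {B : Type} [CommRing B] (ψ : K[X] →+* B) (ζ : B) (v v' : ℕ → K[X]) :
    ev q k ψ ζ (fun j => v j + v' j) = ev q k ψ ζ v + ev q k ψ ζ v' := by
  unfold ev; rw [← sum_add_distrib]; refine sum_congr rfl fun j _ => ?_
  rw [map_add]; ring

lemma ev_smul {B : Type} [CommRing B] (ψ : K[X] →+* B) (ζ : B) (p : K[X]) (v : ℕ → K[X]) :
    ev q k ψ ζ (fun j => p * v j) = ψ p * ev q k ψ ζ v := by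
  unfold ev; rw [mul_sum]; refine sum_congr rfl fun j _ => ?_
  rw [map_mul]; ring

lemma ev_sum {ι : Type*} {B : Type} [CommRing B] (ψ : K[X] →+* B) (ζ : B) (s : Finset ι)
    (v : ι → ℕ → K[X]) :
    ev q k ψ ζ (fun j => ∑ i ∈ s, v i j) = ∑ i ∈ s, ev q k ψ ζ (v i) := by
  unfold ev; rw [sum_comm]; refine sum_congr rfl fun j _ => ?_
  rw [map_sum, sum_mul, sum_mul]

end nf

/-! ### Points of the curve over an algebraically closed field -/

section points
variable {K : Type} [Field K] {p e q k : ℕ} [Fact p.Prime] [CharP K p]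

lemma two_le_q (he : 0 < e) (hq : q = p ^ e) : 2 ≤ q := by
  have h1 : 2 ≤ p := (Fact.out : p.Prime).two_le
  have h2 : p ^ 1 ≤ p ^ e := Nat.pow_le_pow_right (by omega) he
  rw [pow_one] at h2
  omega

lemma ss_mul_hh (hq : q = p ^ e) (he : 0 < e) (i : ℕ) :
    ss K q * hh K q i = X ^ q ^ i - X := by
  have h2 := two_le_q he hq
  unfold hh
  rw [mul_sum]
  have h1 : ∀ a ∈ range i, ss K q * ss K q ^ (q ^ a - 1) = X ^ q ^ (a + 1) - X ^ q ^ a := by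
    intro a _
    rw [← pow_succ', Nat.sub_add_cancel (Nat.one_le_pow _ _ (by omega))]
    unfold ss
    have : q ^ a = p ^ (e * a) := by rw [hq, pow_mul]
    rw [this, sub_pow_char_pow, ← pow_mul, ← this]
    congr 2
    ring
  rw [sum_congr rfl h1, sum_range_sub (fun a => (X : K[X]) ^ q ^ a)]
  simp

lemma hh_one : hh K q 1 = 1 := by simp [hh]

lemma eval_ss_pow {m : ℕ} (t : K) :
    eval (t ^ p ^ m) (ss K q) = eval t (ss K q) ^ p ^ m := by
  simp only [ss, eval_sub, eval_pow, eval_X]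
  rw [sub_pow_char_pow, ← pow_mul, ← pow_mul, mul_comm]

lemma eval_hh_pow {m i : ℕ} (t : K) :
    eval (t ^ p ^ m) (hh K q i) = eval t (hh K q i) ^ p ^ m := by
  simp only [hh, eval_finsetSum, eval_pow]
  rw [sum_pow_char_pow]
  refine sum_congr rfl fun a _ => ?_
  rw [eval_ss_pow, ← pow_mul, ← pow_mul, mul_comm]

omit [Fact p.Prime] [CharP K p] in
lemma OnCurve.map {φ : ℕ → K} {B B' : Type} [CommRing B] [CommRing B'] {ψ : K[X] →+* B} {ζ : B}
    (h : OnCurve q k φ ψ ζ) (g : B →+* B') : OnCurve q k φ (g.comp ψ) (g ζ) := by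
  have := congrArg g h
  unfold OnCurve
  simpa only [map_mul, map_pow, map_sum, RingHom.comp_apply] using this

omit [Fact p.Prime] [CharP K p] in
lemma ev_map {B B' : Type} [CommRing B] [CommRing B'] (ψ : K[X] →+* B) (ζ : B)
    (g : B →+* B') (v : ℕ → K[X]) : ev q k (g.comp ψ) (g ζ) v = g (ev q k ψ ζ v) := by
  simp [ev, map_sum]

lemma OnCurve.ne_zero (hk : 2 ≤ k) (h2 : 2 ≤ q) {φ : ℕ → K} (hφ : φ k ≠ 0) {t ζ : K}
    (hh0 : eval t (hh K q (k - 1)) ≠ 0)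
    (h : OnCurve q k φ (evalRingHom t) ζ) : ζ ≠ 0 := by
  rintro rfl
  unfold OnCurve at h
  have h3 : q ^ k - 1 ≠ 0 := by
    have : q ^ 1 ≤ q ^ k := Nat.pow_le_pow_right (by omega) (by omega)
    rw [pow_one] at this; omega
  rw [zero_pow h3, mul_zero, Finset.sum_eq_single k] at h
  · simp [hφ, hh0] at h
  · intro i hi hik
    rw [mem_Icc] at hi
    have : q ^ i < q ^ k := Nat.pow_lt_pow_right (by omega) (by omega)
    rw [zero_pow (by omega), mul_zero]
  · intro h4; exact absurd (mem_Icc.2 ⟨hk, le_rfl⟩) h4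

omit [Fact p.Prime] [CharP K p] in
/-- The left-hand minus the right-hand side of the equation of the curve over the point `t`, as a
polynomial in `ζ`. -/
noncomputable def fib (q k : ℕ) (φ : ℕ → K) (t : K) : K[X] :=
  C (eval t (ss K q) ^ (q ^ (k - 1) - 1)) * X ^ (q ^ k - 1) -
    ∑ i ∈ Icc 2 k, C (φ i * eval t (hh K q (i - 1)) *
      eval t (ss K q) ^ (q ^ (k - 1) - q ^ (i - 1))) * X ^ (q ^ k - q ^ i)

omit [Fact p.Prime] [CharP K p] in
lemma eval_fib (φ : ℕ → K) (t ζ : K) :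
    eval ζ (fib q k φ t) = 0 ↔ OnCurve q k φ (evalRingHom t) ζ := by
  unfold fib OnCurve
  simp only [eval_sub, eval_mul, eval_C, eval_pow, eval_X, eval_finsetSum, coe_evalRingHom]
  rw [sub_eq_zero]

omit [Fact p.Prime] [CharP K p] in
lemma natDegree_fib (hk : 2 ≤ k) (h2 : 2 ≤ q) (φ : ℕ → K) {t : K} (hs : eval t (ss K q) ≠ 0) :
    (fib q k φ t).natDegree = q ^ k - 1 := by
  unfold fib
  have h4 : q ≤ q ^ k := Nat.le_self_pow (by omega) q
  rw [natDegree_sub_eq_left_of_natDegree_lt]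
  · exact natDegree_C_mul_X_pow _ _ (pow_ne_zero _ hs)
  · rw [natDegree_C_mul_X_pow _ _ (pow_ne_zero _ hs)]
    refine lt_of_le_of_lt (natDegree_sum_le_of_forall_le (n := q ^ k - 2) _ _ ?_) (by omega)
    intro i hi
    rw [mem_Icc] at hi
    refine (natDegree_C_mul_X_pow_le _ _).trans ?_
    have : q ≤ q ^ i := Nat.le_self_pow (by omega) q
    omega

omit [Fact p.Prime] in
lemma q_cast (hq : q = p ^ e) (he : 0 < e) : (q : K) = 0 := by
  rw [hq]; push_cast; rw [CharP.cast_eq_zero, zero_pow (by omega)]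

lemma derivative_fib (hk : 2 ≤ k) (hq : q = p ^ e) (he : 0 < e) (φ : ℕ → K) (t : K) :
    derivative (fib q k φ t) =
      - (C (eval t (ss K q) ^ (q ^ (k - 1) - 1)) * X ^ (q ^ k - 1 - 1)) := by
  have h2 := two_le_q he hq
  have hq0 := q_cast (K := K) hq he
  have hpos : ∀ i, 1 ≤ q ^ i := fun i => Nat.one_le_pow _ _ (by omega)
  unfold fib
  rw [derivative_sub, derivative_sum, Finset.sum_eq_zero]
  · rw [derivative_C_mul_X_pow, Nat.cast_sub (hpos k), Nat.cast_pow, hq0, zero_pow (by omega)]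
    simp
  · intro i hi
    rw [mem_Icc] at hi
    rw [derivative_C_mul_X_pow, Nat.cast_sub (Nat.pow_le_pow_right (by omega) (by omega)),
      Nat.cast_pow, Nat.cast_pow, hq0, zero_pow (by omega), zero_pow (by omega)]
    simp

lemma eval_derivative_fib_ne (hk : 2 ≤ k) (hq : q = p ^ e) (he : 0 < e) {φ : ℕ → K}
    (hφ : φ k ≠ 0) {t ζ : K} (hs : eval t (ss K q) ≠ 0) (hh0 : eval t (hh K q (k - 1)) ≠ 0)
    (h : OnCurve q k φ (evalRingHom t) ζ) : eval ζ (derivative (fib q k φ t)) ≠ 0 := by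
  have := h.ne_zero hk (two_le_q he hq) hφ hh0
  rw [derivative_fib hk hq he]
  simp [hs, this]

/-- A function of the form `∑ v j * s ^ ⌈j / q⌉ * ζ ^ j` that vanishes at all points over a
sufficiently general `t` has all its coordinates `v j` vanishing at `t`, because there are
`q ^ k - 1` distinct points over `t`. -/
lemma vanish [IsAlgClosed K] (hk : 2 ≤ k) (hq : q = p ^ e) (he : 0 < e) {φ : ℕ → K}
    (hφ : φ k ≠ 0) {t : K} (hs : eval t (ss K q) ≠ 0) (hh0 : eval t (hh K q (k - 1)) ≠ 0)
    {v : ℕ → K[X]}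
    (h : ∀ ζ, OnCurve q k φ (evalRingHom t) ζ → ev q k (evalRingHom t) ζ v = 0) :
    ∀ j < q ^ k - 1, eval t (v j) = 0 := by
  classical
  have hdeg := natDegree_fib hk (two_le_q he hq) φ hs
  have hsep : (fib q k φ t).roots.Nodup := by
    apply nodup_roots
    rw [Polynomial.Separable, isCoprime_iff_aeval_ne_zero_of_isAlgClosed K K]
    intro z
    by_contra hcon
    push Not at hcon
    rw [coe_aeval_eq_eval, eval_fib] at hcon
    exact eval_derivative_fib_ne hk hq he hφ hs hh0 hcon.1 hcon.2
  have hq4 : q ≤ q ^ k := Nat.le_self_pow (by omega) q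
  have h2 := two_le_q he hq
  have hf0 : fib q k φ t ≠ 0 := by
    rintro h0
    rw [h0, natDegree_zero] at hdeg
    omega
  have hcard : (fib q k φ t).roots.toFinset.card = q ^ k - 1 := by
    rw [Multiset.toFinset_card_of_nodup hsep, ← hdeg]
    exact (IsAlgClosed.splits _).natDegree_eq_card_roots.symm
  let P : K[X] := ∑ j ∈ range (q ^ k - 1), C (eval t (v j) * eval t (ss K q) ^ mm q j) * X ^ j
  have hP : P = 0 := by
    by_contra hP0
    refine absurd (card_le_degree_of_subset_roots (p := P)
      (Z := (fib q k φ t).roots.toFinset) ?_) ?_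
    · intro z hz
      rw [Finset.mem_val, Multiset.mem_toFinset, mem_roots hf0, IsRoot.def, eval_fib] at hz
      rw [mem_roots hP0, IsRoot.def, ← h z hz]
      simp only [P, ev, eval_finsetSum, eval_mul, eval_C, eval_pow, eval_X, coe_evalRingHom]
    · rw [hcard, not_le]
      refine lt_of_le_of_lt (natDegree_sum_le_of_forall_le (n := q ^ k - 2) _ _ ?_) (by omega)
      intro i hi
      rw [mem_range] at hi
      exact (natDegree_C_mul_X_pow_le _ _).trans (by omega)
  intro j hj
  have h1 : P.coeff j = 0 := by rw [hP, coeff_zero]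
  simp only [P, finsetSum_coeff, coeff_C_mul, coeff_X_pow] at h1
  rw [Finset.sum_eq_single j] at h1
  · simpa [hs] using h1
  · intro b _ hb; simp [hb.symm]
  · intro h3; exact absurd (mem_range.2 hj) h3

lemma OnCurve.pow {φ : ℕ → K} {t ζ : K} (h : OnCurve q k φ (evalRingHom t) ζ) (m : ℕ) :
    OnCurve q k (fun i => φ i ^ p ^ m) (evalRingHom (t ^ p ^ m)) (ζ ^ p ^ m) := by
  have := congrArg (iterateFrobenius K p m) h
  unfold OnCurve
  simpa only [map_mul, map_pow, map_sum, iterateFrobenius_def, coe_evalRingHom, eval_mul, eval_C,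
    eval_ss_pow, eval_hh_pow] using this

lemma OnCurve.of_pow {φ : ℕ → K} {t ζ : K} {m : ℕ}
    (h : OnCurve q k (fun i => φ i ^ p ^ m) (evalRingHom (t ^ p ^ m)) (ζ ^ p ^ m)) :
    OnCurve q k φ (evalRingHom t) ζ := by
  unfold OnCurve at h ⊢
  apply iterateFrobenius_inj K p m
  simpa only [map_mul, map_pow, map_sum, iterateFrobenius_def, coe_evalRingHom, eval_mul, eval_C,
    eval_ss_pow, eval_hh_pow] using h

end points

/-! ### Irreducibility of the curve -/

section hom
variable {K : Type} [Field K]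

/-- The substitution `T ↦ Z ^ a`, `θ ↦ θ * Z ^ b` from `K[T][θ]` to `K[θ][Z]`: the `Z`-degree of
the image is the weighted degree, and its leading coefficient records the top weighted form. -/
noncomputable def homog (K : Type) [Field K] (a b : ℕ) : K[X][X] →+* K[X][X] :=
  eval₂RingHom ((mapRingHom C).comp (expand K a).toRingHom) (C X * X ^ b)

lemma coeff_homog {a : ℕ} (ha : 0 < a) (b : ℕ) (f : K[X][X]) (D j : ℕ) :
    ((homog K a b f).coeff D).coeff j =
      if b * j ≤ D ∧ a ∣ D - b * j then (f.coeff j).coeff ((D - b * j) / a) else 0 := by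
  have h0 : ∀ i, (((expand K a (f.coeff i)).map (C : K →+* K[X]) *
      (C X * X ^ b) ^ i).coeff D).coeff j = if i = j then (if b * j ≤ D ∧ a ∣ D - b * j then
        (f.coeff j).coeff ((D - b * j) / a) else 0) else 0 := by
    intro i
    rw [mul_pow, ← C_pow, ← pow_mul, ← mul_assoc, coeff_mul_X_pow', apply_ite (fun x => coeff x j),
      coeff_mul_C, coeff_map, coeff_C_mul, coeff_X_pow, coeff_zero, coeff_expand ha]
    by_cases hij : i = j
    · subst hij
      by_cases h1 : b * i ≤ D
      · simp [h1]
      · simp [h1]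
    · rw [if_neg hij, if_neg (Ne.symm hij)]; simp
  unfold homog
  rw [coe_eval₂RingHom, eval₂_eq_sum, Polynomial.sum, finsetSum_coeff, finsetSum_coeff]
  refine (sum_congr rfl fun i _ => h0 i).trans ?_
  rw [Finset.sum_ite_eq']
  split_ifs with h1 h2 h2
  · rfl
  · rfl
  · rw [mem_support_iff, not_not] at h1; simp [h1]
  · rfl

lemma homog_monic {a : ℕ} (ha : 0 < a) (b : ℕ) {f : K[X][X]} (hf : f.Monic) :
    homog K a b f ≠ 0 ∧ b * f.natDegree ≤ (homog K a b f).natDegree := by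
  have h1 : (homog K a b f).coeff (b * f.natDegree) ≠ 0 := by
    intro h
    have h2 := coeff_homog ha b f (b * f.natDegree) f.natDegree
    simp [h, hf.coeff_natDegree] at h2
  refine ⟨?_, le_natDegree_of_ne_zero h1⟩
  intro h; simp [h] at h1

/-- A monic factor of a monic polynomial whose Newton polygon is a single segment of slope
`b / a`, with `a` and `b` coprime, has degree divisible by `a`. -/
lemma dvd_natDegree_of_factor {a b d : ℕ} (ha : 0 < a) (hab : Nat.Coprime a b) {E μ ν : K[X][X]}
    (hμ : μ.Monic) (hν : ν.Monic) (hE : μ * ν = E) (hd : E.natDegree = d)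
    (hle : ∀ j i, (E.coeff j).coeff i ≠ 0 → a * i + b * j ≤ b * d) (had : a ∣ b * d)
    (h0 : (E.coeff 0).coeff (b * d / a) ≠ 0) : a ∣ μ.natDegree ∧ a ∣ ν.natDegree := by
  obtain ⟨hμ0, hμ1⟩ := homog_monic ha b hμ
  obtain ⟨hν0, hν1⟩ := homog_monic ha b hν
  have hH : homog K a b μ * homog K a b ν = homog K a b E := by rw [← map_mul, hE]
  have hdeg := natDegree_mul hμ0 hν0
  rw [hH] at hdeg
  have hEd : (homog K a b E).natDegree ≤ b * d := by
    rw [natDegree_le_iff_coeff_eq_zero]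
    intro N hN
    ext j
    rw [coeff_homog ha, coeff_zero]
    split_ifs with h
    · by_contra hne
      have h3 := hle _ _ hne
      rw [Nat.mul_div_cancel' h.2] at h3
      omega
    · rfl
  have hd2 : μ.natDegree + ν.natDegree = d := by rw [← hd, ← hE, hμ.natDegree_mul hν]
  have hd3 : b * μ.natDegree + b * ν.natDegree = b * d := by rw [← mul_add, hd2]
  have e1 : (homog K a b μ).natDegree = b * μ.natDegree := by omega
  have e2 : (homog K a b ν).natDegree = b * ν.natDegree := by omega
  have e3 : (homog K a b E).natDegree = b * d := by omega
  have hl : (homog K a b μ).leadingCoeff.coeff 0 * (homog K a b ν).leadingCoeff.coeff 0 ≠ 0 := by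
    rw [← mul_coeff_zero, ← leadingCoeff_mul, hH, leadingCoeff, e3, coeff_homog ha]
    simpa [had] using h0
  have key : ∀ f : K[X][X], (homog K a b f).natDegree = b * f.natDegree →
      (homog K a b f).leadingCoeff.coeff 0 ≠ 0 → a ∣ f.natDegree := by
    intro f hf h
    rw [leadingCoeff, hf, coeff_homog ha] at h
    split_ifs at h with h1
    · simp only [mul_zero, Nat.sub_zero] at h1
      exact hab.dvd_of_dvd_mul_left h1.2
    · exact absurd rfl h
  exact ⟨key μ e1 (left_ne_zero_of_mul hl), key ν e2 (right_ne_zero_of_mul hl)⟩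

end hom

section irr
variable {K : Type} [Field K] {p e q k : ℕ} [Fact p.Prime] [CharP K p]

/-- The monic equation of the curve in the coordinate `θ = s * ζ`. -/
noncomputable def gen (q k : ℕ) (φ : ℕ → K) : K[X][X] :=
  X ^ (q ^ k - 1) - ∑ i ∈ Icc 2 k,
    C (C (φ i) * hh K q (i - 1) * ss K q ^ (q ^ i - q ^ (i - 1))) * X ^ (q ^ k - q ^ i)

omit [Fact p.Prime] [CharP K p] in
lemma gen_sum_degree (hk : 2 ≤ k) (h2 : 2 ≤ q) (φ : ℕ → K) :
    (∑ i ∈ Icc 2 k, C (C (φ i) * hh K q (i - 1) * ss K q ^ (q ^ i - q ^ (i - 1))) *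
      (X : K[X][X]) ^ (q ^ k - q ^ i)).degree < ((q ^ k - 1 : ℕ) : WithBot ℕ) := by
  refine lt_of_le_of_lt (degree_sum_le _ _) ?_
  rw [Finset.sup_lt_iff (by exact WithBot.bot_lt_coe _)]
  intro i hi
  rw [mem_Icc] at hi
  refine lt_of_le_of_lt (degree_C_mul_X_pow_le _ _) ?_
  have : q ≤ q ^ i := Nat.le_self_pow (by omega) q
  have : q ≤ q ^ k := Nat.le_self_pow (by omega) q
  norm_cast
  omega

omit [Fact p.Prime] [CharP K p] in
lemma gen_monic (hk : 2 ≤ k) (h2 : 2 ≤ q) (φ : ℕ → K) : (gen q k φ).Monic :=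
  monic_X_pow_sub (n := q ^ k - 1) (gen_sum_degree hk h2 φ)

omit [Fact p.Prime] [CharP K p] in
lemma gen_natDegree (hk : 2 ≤ k) (h2 : 2 ≤ q) (φ : ℕ → K) :
    (gen q k φ).natDegree = q ^ k - 1 := by
  apply natDegree_eq_of_degree_eq_some
  unfold gen
  rw [degree_sub_eq_left_of_degree_lt, degree_X_pow]
  rw [degree_X_pow]
  exact gen_sum_degree hk h2 φ

omit [Fact p.Prime] [CharP K p] in
lemma gen_coeff (φ : ℕ → K) (j : ℕ) : (gen q k φ).coeff j = (if j = q ^ k - 1 then 1 else 0) -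
    ∑ i ∈ Icc 2 k, if j = q ^ k - q ^ i then
      (C (φ i) * hh K q (i - 1) * ss K q ^ (q ^ i - q ^ (i - 1))) else 0 := by
  unfold gen
  rw [coeff_sub, coeff_X_pow, finsetSum_coeff]
  simp only [coeff_C_mul, coeff_X_pow, mul_ite, mul_one, mul_zero]

omit [Fact p.Prime] [CharP K p] in
lemma gen_coeff_zero (hk : 2 ≤ k) (h2 : 2 ≤ q) (φ : ℕ → K) : (gen q k φ).coeff 0 =
    -(C (φ k) * hh K q (k - 1) * ss K q ^ (q ^ k - q ^ (k - 1))) := by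
  rw [gen_coeff, Finset.sum_eq_single k]
  · have : q ≤ q ^ k := Nat.le_self_pow (by omega) q
    rw [if_neg (by omega), if_pos (by omega)]; ring
  · intro i hi hik
    rw [mem_Icc] at hi
    have : q ^ i < q ^ k := Nat.pow_lt_pow_right (by omega) (by omega)
    rw [if_neg (by omega)]
  · intro h; exact absurd (mem_Icc.2 ⟨hk, le_rfl⟩) h

lemma ss_natDegree (h2 : 2 ≤ q) : (ss K q).natDegree = q := by
  unfold ss; rw [natDegree_sub_eq_left_of_natDegree_lt] <;> simp; omega

lemma ss_ne_zero (h2 : 2 ≤ q) : ss K q ≠ 0 := by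
  intro h; have := ss_natDegree (K := K) h2; simp [h] at this; omega

lemma hh_natDegree (hq : q = p ^ e) (he : 0 < e) {i : ℕ} (hi : 1 ≤ i) :
    hh K q i ≠ 0 ∧ (hh K q i).natDegree + q = q ^ i := by
  have h2 := two_le_q he hq
  have h1 := ss_mul_hh (K := K) hq he i
  have h4 : 1 < q ^ i := Nat.one_lt_pow (by omega) (by omega)
  have h3 : (X ^ q ^ i - X : K[X]).natDegree = q ^ i := by
    rw [natDegree_sub_eq_left_of_natDegree_lt] <;> simp; omega
  have h0 : hh K q i ≠ 0 := by
    intro h; rw [h, mul_zero] at h1; rw [← h1] at h3; simp at h3; omega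
  refine ⟨h0, ?_⟩
  rw [← h1, natDegree_mul (ss_ne_zero h2) h0, ss_natDegree h2] at h3
  omega

/-- Every root of `h (k - 1)` is simple and no root of `s`: the product
`s * h (k - 1) = T ^ (q ^ (k - 1)) - T` has derivative `-1`. -/
lemma exists_simple_root [IsAlgClosed K] (hq : q = p ^ e) (he : 0 < e) (hk : 3 ≤ k) :
    ∃ t : K, eval t (hh K q (k - 1)) = 0 ∧ eval t (ss K q) ≠ 0 ∧
      eval t (derivative (hh K q (k - 1))) ≠ 0 := by
  have h2 := two_le_q he hq
  obtain ⟨h0, h1⟩ := hh_natDegree (K := K) hq he (i := k - 1) (by omega)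
  have h3 : q ^ 1 < q ^ (k - 1) := Nat.pow_lt_pow_right (by omega) (by omega)
  rw [pow_one] at h3
  obtain ⟨t, ht⟩ := IsAlgClosed.exists_root (hh K q (k - 1)) (by
    rw [degree_eq_natDegree h0]; norm_cast; omega)
  rw [IsRoot.def] at ht
  have h4 := congrArg (fun g => eval t (derivative g)) (ss_mul_hh (K := K) hq he (k - 1))
  simp only [derivative_mul, eval_add, eval_mul, ht, mul_zero, zero_add, derivative_sub,
    derivative_X_pow, eval_sub, derivative_X, eval_one, Nat.cast_pow,
    q_cast (K := K) hq he, eval_pow, eval_X, eval_C] at h4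
  rw [zero_pow (by omega), zero_mul, zero_sub] at h4
  have h5 := h4 ▸ (neg_ne_zero.2 (one_ne_zero (α := K)))
  exact ⟨t, ht, left_ne_zero_of_mul h5, right_ne_zero_of_mul h5⟩

lemma geom_cast (q n : ℕ) : ((q : ℤ) - 1) * ((∑ i ∈ range n, q ^ i : ℕ) : ℤ) = q ^ n - 1 := by
  push_cast; exact mul_geom_sum (q : ℤ) n

/-- The equation of the curve is irreducible over `K(T)`. At a simple root `t` of `h (k - 1)`, the
equation reduces modulo `T - t` to one divisible by a high power of `θ`, and its constant term
has a simple zero, so only one of two monic factors has its constant term vanishing at `t`; the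
other one has small degree. By the Newton polygon at infinity, the degree of each factor is a
multiple of `a = 1 + q + … + q ^ (k - 1)`, and so the small degree is zero. -/
lemma gen_irreducible [IsAlgClosed K] (hq : q = p ^ e) (he : 0 < e) (hk : 3 ≤ k) {φ : ℕ → K}
    (hφ : φ k ≠ 0) : Irreducible (gen q k φ) := by
  have h2 := two_le_q he hq
  have hd := gen_natDegree (k := k) (by omega) h2 φ
  have hm := gen_monic (k := k) (by omega) h2 φ
  have hc0 := gen_coeff_zero (k := k) (by omega) h2 φ
  have hqk : q ≤ q ^ k := Nat.le_self_pow (by omega) q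
  obtain ⟨t, ht, hst, hdt⟩ := exists_simple_root (K := K) hq he hk
  have hYk : q ^ k = q * q ^ (k - 1) := by rw [← pow_succ']; congr 1; omega
  have hYk2 : q ^ (k - 1) = q * q ^ (k - 2) := by rw [← pow_succ']; congr 1; omega
  obtain ⟨a, ha⟩ : ∃ a, a = ∑ i ∈ range k, q ^ i := ⟨_, rfl⟩
  obtain ⟨b, hb⟩ : ∃ b, b = q * (q ^ (k - 1) + ∑ i ∈ range (k - 2), q ^ i) := ⟨_, rfl⟩
  have haq : ((q : ℤ) - 1) * a = q ^ k - 1 := by rw [ha]; exact geom_cast q k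
  have hbq : ((q : ℤ) - 1) * b = q ^ (k + 1) - q ^ k + q ^ (k - 1) - q := by
    have := geom_cast q (k - 2)
    have e1 : (q : ℤ) ^ k = q * q ^ (k - 1) := by exact_mod_cast hYk
    have e2 : (q : ℤ) ^ (k - 1) = q * q ^ (k - 2) := by exact_mod_cast hYk2
    rw [hb, pow_succ, e1, e2]
    push_cast at this ⊢
    rw [e2]
    linear_combination (q : ℤ) * this
  have ha1 : q ^ (k - 1) < a := by
    obtain ⟨κ, rfl⟩ : ∃ κ, k = κ + 1 := ⟨k - 1, by omega⟩
    rw [ha, sum_range_succ, Nat.add_sub_cancel]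
    obtain ⟨κ', rfl⟩ : ∃ κ', κ = κ' + 1 := ⟨κ - 1, by omega⟩
    rw [sum_range_succ']
    simp
  have hcop : Nat.Coprime a b := by
    have haq1 : Nat.Coprime a q := by
      obtain ⟨κ, rfl⟩ : ∃ κ, k = κ + 1 := ⟨k - 1, by omega⟩
      rw [ha, sum_range_succ', pow_zero]
      have : ∑ i ∈ range κ, q ^ (i + 1) = (∑ i ∈ range κ, q ^ i) * q := by
        rw [sum_mul]; exact sum_congr rfl fun i _ => pow_succ _ _
      rw [this, Nat.coprime_mul_right_add_left]
      exact Nat.coprime_one_left q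
    rw [hb]
    refine Nat.Coprime.mul_right haq1 ?_
    have : a = (q ^ (k - 1) + ∑ i ∈ range (k - 2), q ^ i) + q ^ (k - 2) := by
      obtain ⟨κ, rfl⟩ : ∃ κ, k = κ + 2 := ⟨k - 2, by omega⟩
      rw [ha, sum_range_succ, sum_range_succ]
      simp only [Nat.add_sub_cancel, show κ + 2 - 1 = κ + 1 by omega]
      ring
    have h3 : Nat.Coprime a (q ^ (k - 2)) := haq1.pow_right _
    rw [this] at h3 ⊢
    generalize q ^ (k - 1) + ∑ i ∈ range (k - 2), q ^ i = S at h3 ⊢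
    rw [Nat.coprime_add_self_left] at h3
    rw [Nat.coprime_self_add_left]
    exact h3.symm
  have ha0 : 0 < a := by omega
  have hq1 : (0 : ℤ) < q - 1 := by have : (2 : ℤ) ≤ q := by exact_mod_cast h2
                                   linarith
  have hYkz : (q : ℤ) ^ k = q * q ^ (k - 1) := by exact_mod_cast hYk
  have hbd : b * (q ^ k - 1) = a * (q ^ (k - 1) - q + q * (q ^ k - q ^ (k - 1))) := by
    have e1 : q ≤ q ^ (k - 1) := Nat.le_self_pow (by omega) q
    have e2 : q ^ (k - 1) ≤ q ^ k := Nat.pow_le_pow_right (by omega) (by omega)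
    zify [e1, e2, show 1 ≤ q ^ k by omega]
    rw [← haq]
    have : (q : ℤ) ^ (k - 1) - q + q * (q ^ k - q ^ (k - 1)) = (q - 1) * b := by
      rw [hbq, pow_succ, hYkz]; ring
    rw [this]; ring
  have hdvd : ∀ μ ν : K[X][X], μ.Monic → ν.Monic → μ * ν = gen q k φ →
      a ∣ μ.natDegree ∧ a ∣ ν.natDegree := by
    intro μ ν hμ hν hμν
    refine dvd_natDegree_of_factor (b := b) ha0 hcop hμ hν hμν hd ?_ ⟨_, hbd⟩ ?_
    · intro j i hne
      have hPB : PB a ((gen q k φ).coeff j) (b * (q ^ k - 1 : ℕ) - b * j) := by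
        rw [gen_coeff]
        refine PB.sub ?_ (PB.sum _ _ fun l hl => ?_)
        · split_ifs with hj
          · rw [hj]; exact PB.one (by simp)
          · exact PB.zero
        · rw [mem_Icc] at hl
          split_ifs with hj
          · refine (((PB.C (φ l) (le_refl 0)).mul (PB_hh h2 _ (l - 1))).mul
              ((PB_ss h2 _).pow _)).mono ?_
            have hlk : q ^ l ≤ q ^ k := Nat.pow_le_pow_right (by omega) (by omega)
            have hlk1 : q ^ (l - 1) ≤ q ^ l := Nat.pow_le_pow_right (by omega) (by omega)
            have hlk2 : q ^ (l - 1) ≤ q ^ (k - 1) := Nat.pow_le_pow_right (by omega) (by omega)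
            have hl1 : q ^ l = q * q ^ (l - 1) := by rw [← pow_succ']; congr 1; omega
            have hl1z : (q : ℤ) ^ l = q * q ^ (l - 1) := by exact_mod_cast hl1
            have hlk2z : (q : ℤ) ^ (l - 1) ≤ q ^ (k - 1) := by exact_mod_cast hlk2
            rw [hj]
            push_cast [hlk, hlk1, show 1 ≤ q ^ k by omega]
            rw [← mul_le_mul_iff_right₀ hq1, hl1z, hYkz]
            rw [pow_succ, hYkz] at hbq
            rw [hYkz] at haq
            have e1 : ((q : ℤ) - 1) * (0 + a * (q ^ (l - 1) - q) +
                (q * q ^ (l - 1) - q ^ (l - 1)) * (a * q)) = ((q - 1) * a) *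
                ((q ^ (l - 1) - q) + (q * q ^ (l - 1) - q ^ (l - 1)) * q) := by ring
            have e2 : ((q : ℤ) - 1) * (b * (q * q ^ (k - 1) - 1) -
                b * (q * q ^ (k - 1) - q * q ^ (l - 1))) =
                ((q - 1) * b) * (q * q ^ (l - 1) - 1) := by ring
            rw [e1, e2, haq, hbq]
            nlinarith [mul_nonneg hq1.le (sub_nonneg.2 hlk2z)]
          · exact PB.zero
      have := hPB i hne
      have h8 : ((a * i + b * j : ℕ) : ℤ) ≤ ((b * (q ^ k - 1) : ℕ) : ℤ) := by
        push_cast at this ⊢; linarith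
      exact_mod_cast h8
    · rw [hbd, Nat.mul_div_cancel_left _ ha0, hc0, coeff_neg, neg_ne_zero]
      obtain ⟨e0, e1⟩ := hh_natDegree (K := K) hq he (i := k - 1) (by omega)
      have e2 : (C (φ k) * hh K q (k - 1) * ss K q ^ (q ^ k - q ^ (k - 1))).natDegree =
          q ^ (k - 1) - q + q * (q ^ k - q ^ (k - 1)) := by
        rw [natDegree_mul (mul_ne_zero (C_ne_zero.2 hφ) e0) (pow_ne_zero _ (ss_ne_zero h2)),
          natDegree_C_mul hφ, natDegree_pow, ss_natDegree h2, mul_comm q]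
        omega
      rw [← e2, coeff_natDegree, leadingCoeff_ne_zero]
      exact mul_ne_zero (mul_ne_zero (C_ne_zero.2 hφ) e0) (pow_ne_zero _ (ss_ne_zero h2))
  have hcoef : ∀ ν : K[X][X], ∀ μ : K[X][X], μ.Monic → ν.Monic → μ * ν = gen q k φ →
      eval t (ν.coeff 0) ≠ 0 → ν.natDegree = 0 := by
    intro ν μ hμ hν hμν hne
    obtain ⟨c, hc⟩ := (hdvd μ ν hμ hν hμν).2
    have h3 : (X : K[X]) ^ (q ^ k - q ^ (k - 1)) ∣ (gen q k φ).map (evalRingHom t) := by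
      rw [X_pow_dvd_iff]
      intro j hj
      have : 1 ≤ q ^ (k - 1) := Nat.one_le_pow _ _ (by omega)
      rw [coeff_map, gen_coeff, if_neg (by omega), zero_sub, map_neg, map_sum, neg_eq_zero]
      refine Finset.sum_eq_zero fun i hi => ?_
      rw [mem_Icc] at hi
      split_ifs with hji
      · have hik : i = k := by
          by_contra hik
          have : q ^ i ≤ q ^ (k - 1) := Nat.pow_le_pow_right (by omega) (by omega)
          omega
        simp [hik, ht]
      · simp
    have h4 : (X : K[X]) ^ (q ^ k - q ^ (k - 1)) ∣ μ.map (evalRingHom t) := by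
      rw [← hμν, Polynomial.map_mul] at h3
      refine IsCoprime.dvd_of_dvd_mul_right (IsCoprime.pow_left ?_) h3
      rw [(irreducible_X).coprime_iff_not_dvd, X_dvd_iff, coeff_map]
      exact hne
    have h5 := natDegree_le_of_dvd h4 (hμ.map _).ne_zero
    rw [natDegree_X_pow, hμ.natDegree_map] at h5
    have h6 := hμ.natDegree_mul hν
    rw [hμν, hd] at h6
    have h7 : q ^ (k - 1) ≤ q ^ k := Nat.pow_le_pow_right (by omega) (by omega)
    rcases Nat.eq_zero_or_pos c with h8 | h8
    · rw [hc, h8, mul_zero]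
    · have : a * 1 ≤ a * c := Nat.mul_le_mul_left _ h8
      omega
  rw [hm.irreducible_iff_natDegree]
  refine ⟨?_, ?_⟩
  · intro h; rw [h] at hd; simp at hd; omega
  intro μ ν hμ hν hμν
  by_cases h1 : eval t (ν.coeff 0) = 0
  · by_cases h3 : eval t (μ.coeff 0) = 0
    · -- the product of the two constant terms would have a double zero at `t`
      exfalso
      have h4 : μ.coeff 0 * ν.coeff 0 = (gen q k φ).coeff 0 := by rw [← mul_coeff_zero, hμν]
      rw [hc0] at h4
      have h5 := congrArg (fun g => eval t (derivative g)) h4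
      simp [derivative_mul, h1, h3, ht, hst, hdt, hφ] at h5
    · exact Or.inl (hcoef μ ν hν hμ (by rw [mul_comm, hμν]) h3)
  · exact Or.inr (hcoef ν μ hμ hν hμν h1)

/-- The generic point of the curve: over a suitable field extension of `K(T)` the functions
`s ^ ⌈j / q⌉ * ζ ^ j` with `j < q ^ k - 1` are linearly independent over `K[T]`. -/
lemma exists_generic [IsAlgClosed K] (hq : q = p ^ e) (he : 0 < e) (hk : 3 ≤ k) {φ : ℕ → K}
    (hφ : φ k ≠ 0) : ∃ (M : Type) (_ : Field M) (ψ : K[X] →+* M) (ζ : M),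
    OnCurve q k φ ψ ζ ∧ ∀ v, ev q k ψ ζ v = 0 → ∀ j < q ^ k - 1, v j = 0 := by
  classical
  have h2 := two_le_q he hq
  have hm := gen_monic (k := k) (by omega) h2 φ
  have hirr := (hm.irreducible_iff_irreducible_map_fraction_map (K := FractionRing K[X])).1
    (gen_irreducible hq he hk hφ)
  obtain ⟨G, hGdef⟩ : ∃ G, G = (gen q k φ).map (algebraMap K[X] (FractionRing K[X])) := ⟨_, rfl⟩
  rw [← hGdef] at hirr
  have : Fact (Irreducible G) := ⟨hirr⟩
  let ψ : K[X] →+* AdjoinRoot G := (AdjoinRoot.of G).comp (algebraMap K[X] (FractionRing K[X]))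
  have hψ : Function.Injective ψ := (AdjoinRoot.of G).injective.comp
    (IsFractionRing.injective K[X] (FractionRing K[X]))
  have hs : ψ (ss K q) ≠ 0 := (map_ne_zero_iff ψ hψ).2 (ss_ne_zero h2)
  have hroot : eval₂ ψ (AdjoinRoot.root G) (gen q k φ) = 0 := by
    have := AdjoinRoot.eval₂_root G
    rwa [hGdef, eval₂_map, ← hGdef] at this
  obtain ⟨ζ, hζ⟩ : ∃ ζ, AdjoinRoot.root G = ψ (ss K q) * ζ :=
    ⟨AdjoinRoot.root G / ψ (ss K q), by field_simp⟩
  refine ⟨AdjoinRoot G, inferInstance, ψ, ζ, ?_, ?_⟩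
  · unfold OnCurve
    have hYk' : q ^ (k - 1) ≤ q ^ k := Nat.pow_le_pow_right (by omega) (by omega)
    have hY1 : 1 ≤ q ^ (k - 1) := Nat.one_le_pow _ _ (by omega)
    rw [← mul_right_inj' (pow_ne_zero (q ^ k - q ^ (k - 1)) hs)]
    unfold gen at hroot
    rw [eval₂_sub, eval₂_X_pow, eval₂_finsetSum, sub_eq_zero, hζ, mul_pow] at hroot
    rw [← mul_assoc, ← pow_add, show q ^ k - q ^ (k - 1) + (q ^ (k - 1) - 1) = q ^ k - 1 by omega,
      hroot, mul_sum]
    refine sum_congr rfl fun i hi => ?_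
    rw [mem_Icc] at hi
    have : q ^ i ≤ q ^ k := Nat.pow_le_pow_right (by omega) (by omega)
    have : q ^ (i - 1) ≤ q ^ (k - 1) := Nat.pow_le_pow_right (by omega) (by omega)
    have : q ^ (i - 1) ≤ q ^ i := Nat.pow_le_pow_right (by omega) (by omega)
    rw [eval₂_mul, eval₂_C, eval₂_X_pow, map_mul ψ (C (φ i) * _), map_pow, mul_pow]
    have e1 : ψ (ss K q) ^ (q ^ i - q ^ (i - 1)) * ψ (ss K q) ^ (q ^ k - q ^ i) =
        ψ (ss K q) ^ (q ^ k - q ^ (k - 1)) * ψ (ss K q) ^ (q ^ (k - 1) - q ^ (i - 1)) := by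
      rw [← pow_add, ← pow_add]; congr 1; omega
    linear_combination (ψ (C (φ i) * hh K q (i - 1)) * ζ ^ (q ^ k - q ^ i)) * e1
  · intro v hv
    let Q : (FractionRing K[X])[X] := ∑ j ∈ range (q ^ k - 1),
      C (algebraMap K[X] (FractionRing K[X]) (v j * ss K q ^ mm q j) /
        algebraMap K[X] (FractionRing K[X]) (ss K q) ^ j) * X ^ j
    have hQ : AdjoinRoot.mk G Q = 0 := by
      rw [← hv]
      simp only [Q, ev, map_sum, map_mul, map_pow, AdjoinRoot.mk_C, AdjoinRoot.mk_X, map_div₀]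
      refine sum_congr rfl fun j _ => ?_
      have e1 : ∀ x, (AdjoinRoot.of G) (algebraMap K[X] (FractionRing K[X]) x) = ψ x :=
        fun _ => rfl
      simp only [e1]
      rw [hζ, mul_pow]
      field_simp
    rw [AdjoinRoot.mk_eq_zero] at hQ
    have hG : G.natDegree = q ^ k - 1 := by
      rw [hGdef, hm.natDegree_map, gen_natDegree (by omega) h2]
    have hqk : q ≤ q ^ k := Nat.le_self_pow (by omega) q
    have hQ0 : Q = 0 := by
      refine eq_zero_of_dvd_of_natDegree_lt hQ ?_
      rw [hG]
      refine lt_of_le_of_lt (natDegree_sum_le_of_forall_le (n := q ^ k - 2) _ _ ?_) (by omega)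
      intro i hi
      rw [mem_range] at hi
      exact (natDegree_C_mul_X_pow_le _ _).trans (by omega)
    intro j hj
    have h1 : Q.coeff j = 0 := by rw [hQ0, coeff_zero]
    simp only [Q, finsetSum_coeff, coeff_C_mul, coeff_X_pow] at h1
    rw [Finset.sum_eq_single j] at h1
    · have hs' : ss K q ≠ 0 := ss_ne_zero h2
      simpa [hs'] using h1
    · intro b _ hb; simp [hb.symm]
    · intro h3; exact absurd (mem_range.2 hj) h3

end irr

/-! ### Functions of small weight are determined by their jets -/

section jets
variable {K : Type} [Field K] {p e q k : ℕ} [Fact p.Prime] [CharP K p]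

omit [Fact p.Prime] [CharP K p] in
/-- Weights of this shape are those of a multiplication matrix, so the lemma bounds the degree of
a norm. -/
lemma PB_det {d : ℕ} (A : Matrix (Fin d) (Fin d) K[X]) (w : ℤ) (W : ℕ → ℤ)
    (hA : ∀ i j, PB d (A i j) (w + W i - W j)) : PB d A.det (d * w) := by
  rw [Matrix.det_apply']
  refine PB.sum _ _ fun σ _ => ?_
  have h1 : PB d (∏ i, A (σ i) i) (∑ i, (w + W (σ i) - W i)) :=
    PB.prod _ _ _ fun i _ => hA _ _
  have h2 : ∑ i, (w + W (σ i) - W i) = d * w := by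
    rw [Finset.sum_sub_distrib, Finset.sum_add_distrib,
      Equiv.sum_comp σ (fun i : Fin d => W i)]
    simp
  rw [h2] at h1
  rcases Int.units_eq_one_or (Equiv.Perm.sign σ) with h | h
  · rw [h]; simpa using h1
  · rw [h]; simpa using h1.neg

/-- A function of weight `w` on the curve that vanishes to order more than `w` along a formal
branch over the point `t` (a point with values in a ring where only the multiples of
`(T - t) ^ ρ` vanish) is zero. Indeed its norm is a polynomial in `T` of degree at most `w`,
divisible by `(T - t) ^ ρ`. -/
lemma eq_zero_of_jet [IsAlgClosed K] (hq : q = p ^ e) (he : 0 < e) (hk : 3 ≤ k) {φ : ℕ → K}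
    (hφ : φ k ≠ 0) {a : ℕ → K[X]} {w : ℤ} (ha : Bd q k a w) {ρ : ℕ} (hw : w < ρ) {t : K}
    {B : Type} [CommRing B] {ψ : K[X] →+* B} (hψ : ∀ g, ψ g = 0 → (X - C t) ^ ρ ∣ g) {ζ : B}
    (hc : OnCurve q k φ ψ ζ) (hev : ev q k ψ ζ a = 0) : ∀ j < q ^ k - 1, a j = 0 := by
  have h2 := two_le_q he hq
  have hqk : q ≤ q ^ k := Nat.le_self_pow (by omega) q
  have hd0 : 0 < q ^ k - 1 := by omega
  let A : Matrix (Fin (q ^ k - 1)) (Fin (q ^ k - 1)) K[X] :=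
    fun i j => mulmono q k φ a (mm q i) i j
  have hA : ∀ i j, PB (q ^ k - 1) (A i j) (w + wt q k i - wt q k j) := by
    intro i j
    refine (mulmono_Bd h2 (by omega) φ le_rfl ha j j.2).mono (le_of_eq ?_)
    unfold wt; ring
  have hdet : PB (q ^ k - 1) A.det ((q ^ k - 1 : ℕ) * w) := PB_det A w (fun i => wt q k i) hA
  have hψdet : ψ A.det = 0 := by
    let u : Fin (q ^ k - 1) → B := fun j => ψ (ss K q) ^ mm q j * ζ ^ (j : ℕ)
    have hu : (A.map ψ).mulVec u = 0 := by
      ext i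
      have h3 := mulmono_ev h2 (by omega) a (M := mm q i) (N := i) le_rfl hc
      rw [hev, zero_mul] at h3
      rw [Pi.zero_apply, ← h3]
      unfold ev
      rw [Finset.sum_range]
      simp only [Matrix.mulVec, dotProduct, A, u]
      exact sum_congr rfl fun j _ => (mul_assoc _ _ _).symm
    have h4 := congrArg (fun x => (A.map ψ).adjugate.mulVec x ⟨0, hd0⟩) hu
    simp only [Matrix.mulVec_mulVec, Matrix.adjugate_mul, Matrix.smul_mulVec, Matrix.one_mulVec,
      Matrix.mulVec_zero, Pi.smul_apply, Pi.zero_apply, u, mm_zero h2, pow_zero, mul_one,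
      smul_eq_mul] at h4
    rw [RingHom.map_det]
    exact h4
  have hdet0 : A.det = 0 := by
    by_contra h0
    have h3 := hdet.natDegree h0
    have h4 := natDegree_le_of_dvd (hψ _ hψdet) h0
    rw [natDegree_pow, natDegree_X_sub_C, mul_one] at h4
    have h5 : (A.det.natDegree : ℤ) ≤ w := by
      refine le_of_mul_le_mul_left h3 ?_
      exact_mod_cast hd0
    omega
  obtain ⟨v, hv0, hv⟩ := Matrix.exists_vecMul_eq_zero_iff.2 hdet0
  obtain ⟨M, _, ψ', ζ', hc', hgen⟩ := exists_generic (K := K) hq he hk hφ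
  let v' : ℕ → K[X] := fun i => if h : i < q ^ k - 1 then v ⟨i, h⟩ else 0
  have hprod : ev q k ψ' ζ' a * ev q k ψ' ζ' v' = 0 := by
    have h3 : ev q k ψ' ζ' v' = ∑ i : Fin (q ^ k - 1),
        ψ' (v i) * (ψ' (ss K q) ^ mm q i * ζ' ^ (i : ℕ)) := by
      unfold ev
      rw [Finset.sum_range]
      refine sum_congr rfl fun i _ => ?_
      simp only [v', i.2, dif_pos, Fin.eta]; ring
    rw [h3, mul_sum]
    have h4 : ∀ i : Fin (q ^ k - 1), ev q k ψ' ζ' a *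
        (ψ' (v i) * (ψ' (ss K q) ^ mm q i * ζ' ^ (i : ℕ))) =
        ev q k ψ' ζ' (fun j => v i * mulmono q k φ a (mm q i) i j) := by
      intro i
      rw [ev_smul, mulmono_ev h2 (by omega) a le_rfl hc']
      ring
    rw [sum_congr rfl fun i _ => h4 i, ← ev_sum]
    unfold ev
    refine Finset.sum_eq_zero fun j hj => ?_
    have h5 := congrFun hv ⟨j, mem_range.1 hj⟩
    simp only [Matrix.vecMul, dotProduct, A, Pi.zero_apply] at h5
    beta_reduce
    rw [h5]; simp
  rcases mul_eq_zero.1 hprod with h | h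
  · exact hgen a h
  · exfalso
    apply hv0
    ext1 i
    have := hgen v' h i i.2
    simpa only [v', i.2, dif_pos, Fin.eta, Pi.zero_apply] using this

/-- The equation of the curve as a polynomial in `ζ` over `K[T]`. -/
noncomputable def curvePoly (q k : ℕ) (φ : ℕ → K) : K[X][X] :=
  C (ss K q ^ (q ^ (k - 1) - 1)) * X ^ (q ^ k - 1) -
    ∑ i ∈ Icc 2 k, C (C (φ i) * hh K q (i - 1) *
      ss K q ^ (q ^ (k - 1) - q ^ (i - 1))) * X ^ (q ^ k - q ^ i)

omit [Fact p.Prime] [CharP K p] in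
lemma curvePoly_map (φ : ℕ → K) (t : K) :
    (curvePoly q k φ).map (evalRingHom t) = fib q k φ t := by
  simp [curvePoly, fib, Polynomial.map_sum]

/-- Through a point of the curve at which the projection to the `T`-line is unramified there
passes a formal branch, here truncated modulo `(T - t) ^ (p ^ m)`. Since the ring of truncated
series has characteristic `p`, the `p ^ m`-th powers of functions on the branch are constant. -/
lemma exists_jet (hq : q = p ^ e) (he : 0 < e) (hk : 2 ≤ k) {φ : ℕ → K} (hφ : φ k ≠ 0) {t z : K}
    (hs : eval t (ss K q) ≠ 0) (hh0 : eval t (hh K q (k - 1)) ≠ 0)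
    (hc : OnCurve q k φ (evalRingHom t) z) (m : ℕ) :
    ∃ (B : Type) (_ : CommRing B) (ψ : K[X] →+* B) (ζ : B),
      (∀ g, ψ g = 0 → (X - C t) ^ (p ^ m) ∣ g) ∧ OnCurve q k φ ψ ζ ∧
      (∀ g, ψ g ^ p ^ m = ψ (C (eval t g ^ p ^ m))) ∧ ζ ^ p ^ m = ψ (C (z ^ p ^ m)) := by
  have hpm : 0 < p ^ m := pow_pos (Fact.out : p.Prime).pos m
  let I : Ideal K[X] := Ideal.span {(X - C t) ^ (p ^ m)}
  let ψ : K[X] →+* K[X] ⧸ I := Ideal.Quotient.mk I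
  have hker : ∀ g, ψ g = 0 ↔ (X - C t) ^ (p ^ m) ∣ g := fun g => by
    rw [Ideal.Quotient.eq_zero_iff_mem, Ideal.mem_span_singleton]
  have hpow : ∀ g, eval t g = 0 → ψ g ^ p ^ m = 0 := by
    intro g hg
    rw [← map_pow, hker]
    exact pow_dvd_pow_of_dvd (dvd_iff_isRoot.2 hg) _
  have hpow2 : ∀ g c, eval t g = c → ψ g ^ p ^ m = ψ (C (c ^ p ^ m)) := by
    intro g c hg
    have h1 := hpow (g - C c) (by simp [hg])
    rw [← map_pow, sub_pow_char_pow, map_sub, sub_eq_zero, map_pow] at h1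
    rw [h1, C_pow]
  have hunit : ∀ g, eval t g ≠ 0 → IsUnit (ψ g) := by
    intro g hg
    have h1 : IsCoprime ((X - C t) ^ (p ^ m)) g := by
      refine IsCoprime.pow_left ?_
      rw [(irreducible_X_sub_C t).coprime_iff_not_dvd, dvd_iff_isRoot]
      exact hg
    obtain ⟨a, b, hab⟩ := h1
    have h2 := congrArg ψ hab
    rw [map_add, map_mul, (hker _).2 dvd_rfl, mul_zero, zero_add, map_mul, map_one] at h2
    exact IsUnit.of_mul_eq_one_right _ h2
  have hev : ∀ P : K[X][X], eval t (eval (C z) P) = eval z (P.map (evalRingHom t)) :=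
    fun P => (map_evalRingHom_eval t z P).symm
  have haev : ∀ P : K[X][X], aeval (ψ (C z)) P = ψ (eval (C z) P) := fun P => by
    have := aeval_algebraMap_apply (K[X] ⧸ I) (C z) P
    rwa [coe_aeval_eq_eval] at this
  obtain ⟨ζ, ⟨hζ1, hζ2⟩, -⟩ := existsUnique_nilpotent_sub_and_aeval_eq_zero
    (P := curvePoly q k φ) (x := ψ (C z)) (by
      rw [haev]
      refine ⟨p ^ m, hpow _ ?_⟩
      rw [hev, curvePoly_map, eval_fib]
      exact hc) (by
      rw [haev]
      refine hunit _ ?_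
      rw [hev, ← derivative_map, curvePoly_map]
      exact eval_derivative_fib_ne hk hq he hφ hs hh0 hc)
  refine ⟨K[X] ⧸ I, inferInstance, ψ, ζ, fun g hg => (hker g).1 hg, ?_,
    fun g => hpow2 g _ rfl, ?_⟩
  · unfold OnCurve
    have h1 : ∀ x, algebraMap K[X] (K[X] ⧸ I) x = ψ x := fun _ => rfl
    simp only [curvePoly, map_sub, map_mul, map_sum, aeval_C, map_pow, aeval_X, h1,
      sub_eq_zero] at hζ2
    simpa only [map_mul] using hζ2
  · obtain ⟨g, rfl⟩ := Ideal.Quotient.mk_surjective ζ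
    refine hpow2 g z ?_
    obtain ⟨n, hn⟩ := hζ1
    have h1 : ψ ((C z - g) ^ n) = 0 := by rw [map_pow, map_sub]; exact hn
    rw [hker] at h1
    have h3 := (dvd_pow_self (X - C t) hpm.ne').trans h1
    have h4 := (prime_X_sub_C t).dvd_of_dvd_pow h3
    rw [dvd_iff_isRoot] at h4
    simp only [IsRoot.def, eval_sub, eval_C] at h4
    exact (sub_eq_zero.1 h4).symm

end jets

/-! ### The kernel of the diagonal and sections of polynomials -/

section kernel
variable {K : Type} [Field K] {p e q k : ℕ} [Fact p.Prime] [CharP K p]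

/-- The family of functions `hatA b`, `b < q ^ k - 1`, whose generating function
`∑ b, hatA b * s ^ ⌈b / q⌉ * η ^ b` is `s ^ 2` times the difference quotient
`(E ζ - E η) / (ζ - η)` of the equation `E` of the curve in its second coordinate. Away from the
diagonal it vanishes at pairs of points over the same `T`. -/
noncomputable def hatA (q k : ℕ) (φ : ℕ → K) (b i : ℕ) : K[X] :=
  (if i + b + 1 = q ^ k - 1 then ss K q ^ (q ^ (k - 1) + 1 - mm q b - mm q i) else 0) -
    ∑ l ∈ Icc 2 k, if i + b + 1 = q ^ k - q ^ l then
      C (φ l) * hh K q (l - 1) * ss K q ^ (q ^ (k - 1) + 2 - q ^ (l - 1) - mm q b - mm q i) else 0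

/-- The weight of the diagonal kernel. -/
def kap (q k : ℕ) : ℤ := (q ^ k - 1) * (q * (q ^ (k - 1) + 1)) - (q ^ k - 2) * (q ^ k - q ^ (k - 1))

omit [Fact p.Prime] [CharP K p] in
lemma hatA_exp (h2 : 2 ≤ q) (hk : 2 ≤ k) {b i : ℕ} (h : i + b + 1 = q ^ k - 1) :
    mm q b + mm q i ≤ q ^ (k - 1) + 1 := by
  have h3 := mm_lt h2 b
  have h4 := mm_lt h2 i
  have hYk : q ^ k = q * q ^ (k - 1) := by rw [← pow_succ']; congr 1; omega
  have : q * (mm q b + mm q i) < q * (q ^ (k - 1) + 1 + 1) := by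
    simp only [mul_add, mul_one]; omega
  have := Nat.lt_of_mul_lt_mul_left this
  omega

omit [Fact p.Prime] [CharP K p] in
lemma hatA_exp' (h2 : 2 ≤ q) (hk : 2 ≤ k) {b i l : ℕ} (hl : 2 ≤ l ∧ l ≤ k)
    (h : i + b + 1 = q ^ k - q ^ l) :
    mm q b + mm q i + q ^ (l - 1) ≤ q ^ (k - 1) + 1 := by
  have h3 := mm_lt h2 b
  have h4 := mm_lt h2 i
  have hYk : q ^ k = q * q ^ (k - 1) := by rw [← pow_succ']; congr 1; omega
  have hlq : q ^ l = q * q ^ (l - 1) := by rw [← pow_succ']; congr 1; omega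
  have : q * (mm q b + mm q i + q ^ (l - 1)) < q * (q ^ (k - 1) + 1 + 1) := by
    simp only [mul_add, mul_one]; omega
  have := Nat.lt_of_mul_lt_mul_left this
  omega

omit [Fact p.Prime] [CharP K p] in
lemma hatA_Bd (h2 : 2 ≤ q) (hk : 2 ≤ k) (φ : ℕ → K) (b : ℕ) :
    Bd q k (hatA q k φ b) (kap q k - wt q k b) := by
  intro i _
  have hqk : q ≤ q ^ k := Nat.le_self_pow (by omega) q
  have hYk : q ^ k = q * q ^ (k - 1) := by rw [← pow_succ']; congr 1; omega
  have hYkz : (q : ℤ) ^ k = q * q ^ (k - 1) := by exact_mod_cast hYk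
  unfold hatA
  refine PB.sub ?_ (PB.sum _ _ fun l hl => ?_)
  · split_ifs with h
    · refine ((PB_ss h2 _).pow _).mono (le_of_eq ?_)
      have h1 := hatA_exp h2 hk h
      rw [dd_cast h2, Nat.sub_sub, Nat.cast_sub h1]
      have h3 : (i : ℤ) = q ^ k - 2 - b := by
        have : i + b + 2 = q ^ k := by omega
        zify at this; linarith
      unfold kap wt
      rw [h3]
      push_cast; ring
    · exact PB.zero
  · split_ifs with h
    · rw [mem_Icc] at hl
      refine (((PB.C (φ l) (le_refl 0)).mul (PB_hh h2 _ (l - 1))).mul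
        ((PB_ss h2 _).pow _)).mono ?_
      have h1 := hatA_exp' h2 hk hl h
      have hlk : q ^ l ≤ q ^ k := Nat.pow_le_pow_right (by omega) (by omega)
      have hlk2 : q ^ (l - 1) ≤ q ^ (k - 1) := Nat.pow_le_pow_right (by omega) (by omega)
      have hl1 : q ^ l = q * q ^ (l - 1) := by rw [← pow_succ']; congr 1; omega
      have hl1z : (q : ℤ) ^ l = q * q ^ (l - 1) := by exact_mod_cast hl1
      have hlk2z : (q : ℤ) ^ (l - 1) ≤ q ^ (k - 1) := by exact_mod_cast hlk2
      rw [dd_cast h2, Nat.sub_sub, Nat.sub_sub, Nat.cast_sub (by omega)]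
      have h3 : (i : ℤ) = q ^ k - q ^ l - 1 - b := by
        have : i + b + 1 + q ^ l = q ^ k := by omega
        zify at this; linarith
      unfold kap wt
      rw [h3, hl1z, hYkz]
      push_cast
      have hq1 : (2 : ℤ) ≤ q := by exact_mod_cast h2
      nlinarith [mul_nonneg (show (0 : ℤ) ≤ q - 1 by linarith) (sub_nonneg.2 hlk2z)]
    · exact PB.zero

omit [Fact p.Prime] [CharP K p] in
lemma sum_antidiag {B : Type} [CommRing B] (d N : ℕ) (hN : N ≤ d) (x y : B) :
    ∑ b ∈ range d, ∑ i ∈ range d, (if i + b + 1 = N then x ^ i * y ^ b else 0) =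
      ∑ i ∈ range N, x ^ i * y ^ (N - 1 - i) := by
  rw [sum_comm]
  have h1 : ∀ i ∈ range d, ∑ b ∈ range d, (if i + b + 1 = N then x ^ i * y ^ b else 0) =
      if i < N then x ^ i * y ^ (N - 1 - i) else 0 := by
    intro i _
    split_ifs with h
    · rw [Finset.sum_eq_single (N - 1 - i)]
      · rw [if_pos (by omega)]
      · intro b _ hb; rw [if_neg (by omega)]
      · intro hb; rw [mem_range] at hb; omega
    · exact Finset.sum_eq_zero fun b _ => if_neg (by omega)
  rw [sum_congr rfl h1, ← Finset.sum_filter]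
  refine sum_congr ?_ fun _ _ => rfl
  ext i; simp only [mem_filter, mem_range]; omega

omit [Fact p.Prime] [CharP K p] in
/-- The generating function of the `hatA b`, as a difference quotient multiplied out. -/
lemma hatA_sum (h2 : 2 ≤ q) (hk : 2 ≤ k) (φ : ℕ → K) {B : Type} [CommRing B] (ψ : K[X] →+* B)
    (ζ η : B) :
    ∑ b ∈ range (q ^ k - 1), ev q k ψ ζ (hatA q k φ b) * (ψ (ss K q) ^ mm q b * η ^ b) =
      ψ (ss K q) ^ (q ^ (k - 1) + 1) * (∑ i ∈ range (q ^ k - 1), ζ ^ i * η ^ (q ^ k - 1 - 1 - i)) -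
      ∑ l ∈ Icc 2 k, ψ (C (φ l) * hh K q (l - 1)) * ψ (ss K q) ^ (q ^ (k - 1) + 2 - q ^ (l - 1)) *
        (∑ i ∈ range (q ^ k - q ^ l), ζ ^ i * η ^ (q ^ k - q ^ l - 1 - i)) := by
  rw [← sum_antidiag (q ^ k - 1) (q ^ k - 1) le_rfl]
  have e1 : ∀ l ∈ Icc 2 k, ψ (C (φ l) * hh K q (l - 1)) *
      ψ (ss K q) ^ (q ^ (k - 1) + 2 - q ^ (l - 1)) *
        (∑ i ∈ range (q ^ k - q ^ l), ζ ^ i * η ^ (q ^ k - q ^ l - 1 - i)) =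
      ∑ b ∈ range (q ^ k - 1), ∑ i ∈ range (q ^ k - 1),
        (if i + b + 1 = q ^ k - q ^ l then ψ (C (φ l) * hh K q (l - 1)) *
          ψ (ss K q) ^ (q ^ (k - 1) + 2 - q ^ (l - 1)) * (ζ ^ i * η ^ b) else 0) := by
    intro l _
    rw [← sum_antidiag (q ^ k - 1) (q ^ k - q ^ l)
      (by have := Nat.one_le_pow l q (by omega); omega), mul_sum]
    refine sum_congr rfl fun b _ => ?_
    rw [mul_sum]
    exact sum_congr rfl fun i _ => by rw [mul_ite, mul_zero]
  rw [sum_congr rfl e1, mul_sum]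
  rw [sum_comm (s := Icc 2 k), ← Finset.sum_sub_distrib]
  refine sum_congr rfl fun b _ => ?_
  rw [sum_comm (s := Icc 2 k), mul_sum, ← Finset.sum_sub_distrib]
  unfold ev
  rw [sum_mul]
  refine sum_congr rfl fun i _ => ?_
  unfold hatA
  rw [map_sub, map_sum, sub_mul, sub_mul, sub_mul, sum_mul, sum_mul, sum_mul]
  congr 1
  · split_ifs with h
    · have h1 := hatA_exp h2 hk h
      rw [map_pow]
      calc _ = ψ (ss K q) ^ (q ^ (k - 1) + 1 - mm q b - mm q i) * ψ (ss K q) ^ mm q i *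
            ψ (ss K q) ^ mm q b * (ζ ^ i * η ^ b) := by ring
        _ = _ := by rw [← pow_add, ← pow_add]; congr 2; omega
    · simp
  · refine sum_congr rfl fun l hl => ?_
    rw [mem_Icc] at hl
    split_ifs with h
    · have h1 := hatA_exp' h2 hk hl h
      rw [map_mul ψ _ (ss K q ^ _), map_pow]
      calc _ = ψ (C (φ l) * hh K q (l - 1)) *
            (ψ (ss K q) ^ (q ^ (k - 1) + 2 - q ^ (l - 1) - mm q b - mm q i) *
              ψ (ss K q) ^ mm q i * ψ (ss K q) ^ mm q b) * (ζ ^ i * η ^ b) := by ring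
        _ = _ := by rw [← pow_add, ← pow_add]; congr 3; omega
    · simp

omit [Fact p.Prime] [CharP K p] in
lemma hatA_offdiag (h2 : 2 ≤ q) (hk : 2 ≤ k) {φ : ℕ → K} {ψ : K[X] →+* K}
    {ζ η : K} (hζ : OnCurve q k φ ψ ζ) (hη : OnCurve q k φ ψ η) (hne : ζ ≠ η) :
    ∑ b ∈ range (q ^ k - 1), ev q k ψ ζ (hatA q k φ b) * (ψ (ss K q) ^ mm q b * η ^ b) = 0 := by
  rw [← mul_left_inj' (sub_ne_zero.2 hne), zero_mul, hatA_sum h2 hk, sub_mul, sum_mul, mul_assoc,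
    geom_sum₂_mul]
  have e1 : ∀ l ∈ Icc 2 k, ψ (C (φ l) * hh K q (l - 1)) *
      ψ (ss K q) ^ (q ^ (k - 1) + 2 - q ^ (l - 1)) *
        (∑ i ∈ range (q ^ k - q ^ l), ζ ^ i * η ^ (q ^ k - q ^ l - 1 - i)) * (ζ - η) =
      ψ (ss K q) ^ 2 * (ψ (C (φ l) * hh K q (l - 1)) *
        ψ (ss K q) ^ (q ^ (k - 1) - q ^ (l - 1)) * ζ ^ (q ^ k - q ^ l)) -
      ψ (ss K q) ^ 2 * (ψ (C (φ l) * hh K q (l - 1)) *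
        ψ (ss K q) ^ (q ^ (k - 1) - q ^ (l - 1)) * η ^ (q ^ k - q ^ l)) := by
    intro l hl
    rw [mem_Icc] at hl
    have hlk2 : q ^ (l - 1) ≤ q ^ (k - 1) := Nat.pow_le_pow_right (by omega) (by omega)
    rw [mul_assoc, geom_sum₂_mul,
      show q ^ (k - 1) + 2 - q ^ (l - 1) = 2 + (q ^ (k - 1) - q ^ (l - 1)) by omega, pow_add]
    ring
  rw [sum_congr rfl e1, Finset.sum_sub_distrib, ← mul_sum, ← mul_sum]
  unfold OnCurve at hζ hη
  rw [← hζ, ← hη]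
  have hY1 : 1 ≤ q ^ (k - 1) := Nat.one_le_pow _ _ (by omega)
  rw [show q ^ (k - 1) + 1 = 2 + (q ^ (k - 1) - 1) by omega, pow_add]
  ring

lemma hatA_diag (hq : q = p ^ e) (he : 0 < e) (hk : 2 ≤ k) (φ : ℕ → K) (ψ : K[X] →+* K) (ζ : K) :
    ∑ b ∈ range (q ^ k - 1), ev q k ψ ζ (hatA q k φ b) * (ψ (ss K q) ^ mm q b * ζ ^ b) =
      -(ψ (ss K q) ^ (q ^ (k - 1) + 1) * ζ ^ (q ^ k - 1 - 1)) := by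
  have h2 := two_le_q he hq
  have hq0 := q_cast (K := K) hq he
  have e1 : ∀ N, ∑ i ∈ range N, ζ ^ i * ζ ^ (N - 1 - i) = N * ζ ^ (N - 1) := by
    intro N
    rw [Finset.sum_congr rfl (g := fun _ => ζ ^ (N - 1)), Finset.sum_const, card_range,
      nsmul_eq_mul]
    intro i hi
    rw [mem_range] at hi
    rw [← pow_add]; congr 1; omega
  rw [hatA_sum h2 hk, e1, Finset.sum_eq_zero (s := Icc 2 k), Nat.cast_sub (Nat.one_le_pow _ _ (by omega)),
    Nat.cast_pow, hq0, zero_pow (by omega)]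
  · push_cast; ring
  · intro l hl
    rw [mem_Icc] at hl
    rw [e1, Nat.cast_sub (Nat.pow_le_pow_right (by omega) (by omega)), Nat.cast_pow, Nat.cast_pow,
      hq0, zero_pow (by omega), zero_pow (by omega)]
    simp

/-- The `l`-th section of `g`: `g = ∑ l < r, X ^ l * (sec r l g) (X ^ r)`. -/
noncomputable def sec (r l : ℕ) (g : K[X]) : K[X] :=
  ∑ m ∈ range (g.natDegree + 1), C (g.coeff (r * m + l)) * X ^ m

omit [Fact p.Prime] [CharP K p] in
lemma coeff_sec {r : ℕ} (hr : 0 < r) (l : ℕ) (g : K[X]) (m : ℕ) :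
    (sec r l g).coeff m = g.coeff (r * m + l) := by
  unfold sec
  simp only [finsetSum_coeff, coeff_C_mul, coeff_X_pow, mul_ite, mul_one, mul_zero]
  rw [Finset.sum_ite_eq]
  split_ifs with h
  · rfl
  · rw [mem_range, not_lt] at h
    rw [coeff_eq_zero_of_natDegree_lt]
    nlinarith

omit [Fact p.Prime] [CharP K p] in
lemma eval_sec {r : ℕ} (hr : 0 < r) (g : K[X]) (t : K) :
    ∑ l ∈ range r, t ^ l * eval (t ^ r) (sec r l g) = eval t g := by
  have h1 : g = ∑ l ∈ range r, X ^ l * expand K r (sec r l g) := by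
    ext n
    rw [finsetSum_coeff, Finset.sum_eq_single (n % r)]
    · rw [coeff_X_pow_mul', if_pos (Nat.mod_le n r), coeff_expand hr,
        if_pos (Nat.dvd_sub_mod n), coeff_sec hr]
      congr 1
      rw [Nat.mul_div_cancel' (Nat.dvd_sub_mod n), Nat.sub_add_cancel (Nat.mod_le n r)]
    · intro l hl hne
      rw [mem_range] at hl
      rw [coeff_X_pow_mul']
      split_ifs with h
      · rw [coeff_expand hr, if_neg]
        intro hd
        apply hne
        have := (Nat.modEq_iff_dvd' h).2 hd
        rw [Nat.ModEq, Nat.mod_eq_of_lt hl] at this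
        exact this
      · rfl
    · intro h; exact absurd (mem_range.2 (Nat.mod_lt _ hr)) h
  conv_rhs => rw [h1]
  rw [eval_finsetSum]
  refine sum_congr rfl fun l _ => ?_
  rw [eval_mul, eval_pow, eval_X, expand_eval]

end kernel

/-! ### The auxiliary function -/

section aux
variable {q k : ℕ}

lemma sum_mm (hq : 2 ≤ q) (Y : ℕ) :
    2 * ∑ i ∈ range (q * Y), (q * mm q i : ℤ) = q ^ 2 * Y ^ 2 + q ^ 2 * Y - 2 * q * Y := by
  induction Y with
  | zero => simp
  | succ Y ih =>
    rw [mul_add, mul_one, Finset.sum_range_add, mul_add, ih]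
    have h1 : ∀ i ∈ range q, (q * mm q (q * Y + i) : ℤ) = if i = 0 then q * Y else q * (Y + 1) := by
      intro i hi
      rw [mem_range] at hi
      split_ifs with h
      · rw [mm_unique hq (m := Y)] <;> simp [h]; omega
      · rw [mm_unique hq (m := Y + 1)]
        · push_cast; ring
        · rw [mul_add]; omega
        · rw [mul_add]; omega
    rw [sum_congr rfl h1, ← Nat.succ_pred_eq_of_pos (show 0 < q by omega), Finset.sum_range_succ']
    simp only [Nat.succ_ne_zero, if_false, if_true, Finset.sum_const, card_range, nsmul_eq_mul]
    rw [Nat.succ_pred_eq_of_pos (show 0 < q by omega)]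
    have : ((q.pred : ℕ) : ℤ) = q - 1 := by
      rw [Nat.pred_eq_sub_one, Nat.cast_sub (by omega)]; rfl
    rw [this]
    push_cast
    ring

lemma sum_id (d : ℕ) : 2 * ∑ i ∈ range d, (i : ℤ) = d * (d - 1) := by
  induction d with
  | zero => simp
  | succ d ih => rw [Finset.sum_range_succ, mul_add, ih]; push_cast; ring

lemma sum_wt (hq : 2 ≤ q) (hk : 2 ≤ k) :
    2 * ∑ i ∈ range (q ^ k - 1), wt q k i =
      (q ^ k - 1) * (q * (q ^ (k - 1)) ^ 2 + (q ^ 2 - 2 * q - 2) * q ^ (k - 1)) := by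
  have hYk : q ^ k = q * q ^ (k - 1) := by rw [← pow_succ']; congr 1; omega
  have hYkz : (q : ℤ) ^ k = q * q ^ (k - 1) := by exact_mod_cast hYk
  have hpos : 1 ≤ q ^ (k - 1) := Nat.one_le_pow _ _ (by omega)
  have h1 := sum_mm hq (q ^ (k - 1))
  have h2 := sum_id (q ^ k - 1)
  rw [dd_cast hq] at h2
  rw [← hYk, show q ^ k = q ^ k - 1 + 1 from (Nat.sub_add_cancel
    (Nat.one_le_pow _ _ (by omega))).symm, Finset.sum_range_succ] at h1
  have h3 := mm_sub_one hq (q ^ (k - 1)) hpos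
  rw [← hYk] at h3
  rw [h3] at h1
  unfold wt
  rw [Finset.sum_sub_distrib, ← Finset.mul_sum, ← Finset.sum_mul]
  rw [hYkz] at *
  push_cast at h1
  generalize (q : ℤ) ^ (k - 1) = Y at *
  linear_combination (q * Y - 1) * h1 - (q * Y - Y) * h2

/-- The inequality behind the parameter count for the auxiliary function. -/
lemma count_num (hq : 2 ≤ q) (hk : 3 ≤ k) {S : ℤ}
    (hS : 2 * S = (q ^ k - 1) * (q * (q ^ (k - 1)) ^ 2 + (q ^ 2 - 2 * q - 2) * q ^ (k - 1))) :
    ((q ^ k - 1) * (q : ℤ) ^ (2 * k - 2) + S) * (S + (q ^ k - 1)) ≤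
      (q ^ k - 1) * ((q ^ k - 1) * (q ^ (2 * k) * q ^ (2 * k - 2)) - S) := by
  have e1 : (q : ℤ) ^ (2 * k - 2) = (q ^ (k - 1)) ^ 2 := by rw [← pow_mul]; congr 1; omega
  have e2 : (q : ℤ) ^ (2 * k) = q ^ 2 * (q ^ (k - 1)) ^ 2 := by
    rw [← pow_mul, ← pow_add]; congr 1; omega
  have e3 : (q : ℤ) ^ k = q * q ^ (k - 1) := by rw [← pow_succ']; congr 1; omega
  have hY : (q : ℤ) ^ 2 ≤ q ^ (k - 1) := by
    exact_mod_cast Nat.pow_le_pow_right (by omega) (by omega)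
  rw [e1, e2]
  generalize hd : (q : ℤ) ^ k - 1 = d at *
  generalize (q : ℤ) ^ (k - 1) = Y at *
  have hq' : (2 : ℤ) ≤ q := by exact_mod_cast hq
  generalize (q : ℤ) = q at *
  obtain ⟨g, hg⟩ : ∃ g, g = q * Y ^ 2 + (q ^ 2 - 2 * q - 2) * Y := ⟨_, rfl⟩
  rw [← hg] at hS
  have hY4 : 4 ≤ Y := by nlinarith
  have hg1 : g ≤ (q + 1) * Y ^ 2 - 6 * Y := by rw [hg]; nlinarith
  have hg0 : 0 ≤ g := by
    have a1 : 0 ≤ q * Y + (q ^ 2 - 2 * q - 2) := by nlinarith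
    have a2 := mul_nonneg a1 (show 0 ≤ Y by linarith)
    rw [hg]; linarith
  have hg2 : 0 ≤ 2 * Y ^ 2 + ((q + 1) * Y ^ 2 - 6 * Y) := by linarith [sq_nonneg Y]
  have key : (2 * Y ^ 2 + g) * (g + 2) ≤ 4 * (q ^ 2 * Y ^ 2 * Y ^ 2) - 2 * g := by
    have a1 : (2 * Y ^ 2 + g) * (g + 2) ≤
        (2 * Y ^ 2 + ((q + 1) * Y ^ 2 - 6 * Y)) * (((q + 1) * Y ^ 2 - 6 * Y) + 2) := by
      gcongr
    have a2 : (q + 3) * (q + 1) * Y ^ 4 ≤ 4 * q ^ 2 * Y ^ 4 := by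
      have : (q + 3) * (q + 1) ≤ 4 * q ^ 2 := by nlinarith
      gcongr
    have a3 : (12 * q + 24) * Y ^ 2 * 4 ≤ (12 * q + 24) * Y ^ 2 * Y := by gcongr
    nlinarith [mul_nonneg (show 0 ≤ q by linarith) (sq_nonneg Y), sq_nonneg Y]
  have := mul_le_mul_of_nonneg_left key (sq_nonneg d)
  have e4 : 4 * ((d * Y ^ 2 + S) * (S + d)) = d ^ 2 * ((2 * Y ^ 2 + g) * (g + 2)) := by
    linear_combination (2 * S + 2 * d + (2 * d * Y ^ 2 + d * g)) * hS
  have e5 : 4 * (d * (d * (q ^ 2 * Y ^ 2 * Y ^ 2) - S)) =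
      d ^ 2 * (4 * (q ^ 2 * Y ^ 2 * Y ^ 2) - 2 * g) := by
    linear_combination -2 * d * hS
  linarith

variable {K : Type} [Field K]

lemma mulmono_add (φ : ℕ → K) (c c' : ℕ → K[X]) (M N j : ℕ) :
    mulmono q k φ (c + c') M N j = mulmono q k φ c M N j + mulmono q k φ c' M N j := by
  unfold mulmono
  rw [← sum_add_distrib]
  exact sum_congr rfl fun i _ => by rw [Pi.add_apply]; ring

lemma mulmono_smul (φ : ℕ → K) (a : K) (c : ℕ → K[X]) (M N j : ℕ) :
    mulmono q k φ (a • c) M N j = a • mulmono q k φ c M N j := by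
  unfold mulmono
  rw [smul_sum]
  exact sum_congr rfl fun i _ => by rw [Pi.smul_apply, smul_mul_assoc, smul_mul_assoc]

/-- The auxiliary function `c`. Let `r = q ^ (2 * k)`. For each coordinate `j` of the products
`c * (s ^ ⌈b / q⌉ * ζ ^ b) ^ r`, the coefficients of `T ^ (r * m + (r - 1 - l'))` are made to
vanish whenever `l'` is small relative to the weight of `j` and `m` is small relative to that of
`b`; larger `m` are excluded by the weight of `c`. Such a `c ≠ 0` exists since it has more free
coefficients than there are linear conditions. -/
lemma exists_aux (hq : 2 ≤ q) (hk : 3 ≤ k) (φ : ℕ → K) : ∃ c : ℕ → K[X],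
    (∃ i < q ^ k - 1, c i ≠ 0) ∧ Bd q k c (q ^ (2 * k) * q ^ (2 * k - 2)) ∧
    ∀ b < q ^ k - 1, ∀ j < q ^ k - 1, ∀ m l' : ℕ,
      ((q : ℤ) ^ k - 1) * (m + 1) ≤ q ^ (2 * k - 2) + wt q k b →
      ((q : ℤ) ^ k - 1) * (l' + 1) ≤ wt q k j + 1 →
      (mulmono q k φ c (q ^ (2 * k) * mm q b) (q ^ (2 * k) * b) j).coeff
        (q ^ (2 * k) * m + (q ^ (2 * k) - 1 - l')) = 0 := by
  classical
  obtain ⟨d, hd⟩ : ∃ d, d = q ^ k - 1 := ⟨_, rfl⟩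
  have hdz : (d : ℤ) = q ^ k - 1 := by rw [hd, dd_cast hq]
  have hd1 : 1 ≤ d := by
    have : q ≤ q ^ k := Nat.le_self_pow (by omega) q
    omega
  have hdp : (0 : ℤ) < d := by exact_mod_cast hd1
  rw [← hd, ← hdz]
  obtain ⟨V, hV⟩ : ∃ V : ℤ, V = q ^ (2 * k - 2) := ⟨_, rfl⟩
  have hV0 : 0 ≤ V := by rw [hV]; positivity
  obtain ⟨Wc, hWc⟩ : ∃ Wc : ℤ, Wc = q ^ (2 * k) * q ^ (2 * k - 2) := ⟨_, rfl⟩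
  rw [← hV, show (q : ℤ) ^ (2 * k) * V = Wc by rw [hWc, hV]]
  let M : Fin d → ℕ := fun i => ((Wc - wt q k i) / d + 1).toNat
  let A : Fin d → ℕ := fun b => ((V + wt q k b) / d).toNat
  let B : Fin d → ℕ := fun j => ((wt q k j + 1) / d).toNat
  let U := Σ i : Fin d, Fin (M i)
  let E := (Σ b : Fin d, Fin (A b)) × (Σ j : Fin d, Fin (B j))
  let e : U → ℕ → K[X] := fun u i => if i = u.1 then X ^ (u.2 : ℕ) else 0
  let cc : (U → K) →ₗ[K] (ℕ → K[X]) := Fintype.linearCombination K e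
  let fn : E → (ℕ → K[X]) →ₗ[K] K := fun x =>
    { toFun := fun c => (mulmono q k φ c (q ^ (2 * k) * mm q x.1.1) (q ^ (2 * k) * x.1.1)
        x.2.1).coeff (q ^ (2 * k) * x.1.2 + (q ^ (2 * k) - 1 - x.2.2))
      map_add' := fun c c' => by simp only [mulmono_add, coeff_add]
      map_smul' := fun a c => by simp only [mulmono_smul, coeff_smul, RingHom.id_apply] }
  have hcard : Fintype.card E < Fintype.card U := by
    have hU : Fintype.card U = ∑ i, M i := by simp [U]
    have hE : Fintype.card E = (∑ i, A i) * (∑ i, B i) := by simp [E]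
    rw [hU, hE]
    obtain ⟨S, hSdef⟩ : ∃ S, S = ∑ i ∈ range d, wt q k i := ⟨_, rfl⟩
    have hSf : ∑ i : Fin d, wt q k i = S := by rw [hSdef, Finset.sum_range]
    have hS := sum_wt hq (show 2 ≤ k by omega)
    rw [← hd, ← hSdef] at hS
    have hnum := count_num hq hk hS
    rw [← hdz, ← hV, show (q : ℤ) ^ (2 * k) * V = Wc by rw [hWc, hV]] at hnum
    have h1 : (d : ℤ) * Wc - S < d * ((∑ i, M i : ℕ) : ℤ) := by
      rw [← hSf, Nat.cast_sum, mul_sum]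
      have : (d : ℤ) * Wc = ∑ i : Fin d, Wc := by simp
      rw [this, ← Finset.sum_sub_distrib]
      apply Finset.sum_lt_sum_of_nonempty
      · exact ⟨⟨0, hd1⟩, mem_univ _⟩
      · intro i _
        have a1 := Int.lt_mul_ediv_self_add (x := Wc - wt q k i) hdp
        have a2 := Int.self_le_toNat ((Wc - wt q k i) / d + 1)
        calc Wc - wt q k i < d * ((Wc - wt q k i) / d + 1) := by linarith
          _ ≤ _ := by gcongr
    have h2 : (d : ℤ) * ((∑ i, A i : ℕ) : ℤ) ≤ d * V + S := by
      rw [← hSf, Nat.cast_sum, mul_sum]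
      have : (d : ℤ) * V = ∑ i : Fin d, V := by simp
      rw [this, ← Finset.sum_add_distrib]
      refine Finset.sum_le_sum fun i _ => ?_
      have a0 := wt_nonneg (k := k) hq i
      rw [Int.toNat_of_nonneg (Int.ediv_nonneg (by linarith) hdp.le)]
      exact Int.mul_ediv_self_le hdp.ne'
    have h3 : (d : ℤ) * ((∑ i, B i : ℕ) : ℤ) ≤ S + d := by
      rw [← hSf, Nat.cast_sum, mul_sum]
      have : (d : ℤ) = ∑ i : Fin d, 1 := by simp
      conv_rhs => rw [this]
      rw [← Finset.sum_add_distrib]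
      refine Finset.sum_le_sum fun i _ => ?_
      have a0 := wt_nonneg (k := k) hq i
      rw [Int.toNat_of_nonneg (Int.ediv_nonneg (by linarith) hdp.le)]
      exact Int.mul_ediv_self_le hdp.ne'
    have h4 : (d : ℤ) ^ 2 * ((∑ i, A i : ℕ) * (∑ i, B i : ℕ) : ℤ) <
        d ^ 2 * ((∑ i, M i : ℕ) : ℤ) := by
      calc _ = (d * ((∑ i, A i : ℕ) : ℤ)) * (d * ((∑ i, B i : ℕ) : ℤ)) := by ring
        _ ≤ (d * V + S) * (S + d) := by
          refine mul_le_mul h2 h3 (by positivity) (le_trans (by positivity) h2)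
        _ ≤ d * (d * Wc - S) := hnum
        _ < d * (d * ((∑ i, M i : ℕ) : ℤ)) := by gcongr
        _ = _ := by ring
    have := lt_of_mul_lt_mul_left h4 (by positivity)
    exact_mod_cast this
  have hker : LinearMap.ker ((LinearMap.pi fn).comp cc) ≠ ⊥ := by
    apply LinearMap.ker_ne_bot_of_finrank_lt
    simpa using hcard
  obtain ⟨x, hx, hx0⟩ := (Submodule.ne_bot_iff _).1 hker
  have hcoef : ∀ i n, (cc x i).coeff n = ∑ u : U, if i = u.1 ∧ n = u.2 then x u else 0 := by
    intro i n
    simp only [cc, Fintype.linearCombination_apply, Finset.sum_apply, Pi.smul_apply, e,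
      finsetSum_coeff, coeff_smul]
    refine sum_congr rfl fun u _ => ?_
    by_cases h1 : i = u.1 <;> by_cases h2 : n = u.2 <;> simp [h1, h2, coeff_X_pow]
  refine ⟨cc x, ?_, ?_, ?_⟩
  · obtain ⟨u, hu⟩ := Function.ne_iff.1 hx0
    refine ⟨u.1, u.1.2, fun h0 => hu ?_⟩
    have h1 := hcoef u.1 u.2
    rw [h0, coeff_zero, Finset.sum_eq_single u] at h1
    · simpa using h1.symm
    · rintro ⟨i, n⟩ _ hne
      rw [if_neg]
      rintro ⟨h2, h3⟩
      obtain ⟨i', n'⟩ := u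
      have : i' = i := Fin.ext h2
      subst this
      have : n' = n := Fin.ext h3
      exact hne (by rw [this])
    · intro h; exact absurd (mem_univ _) h
  · intro i _ n hn
    rw [hcoef] at hn
    obtain ⟨u, _, hu⟩ := Finset.exists_ne_zero_of_sum_ne_zero hn
    have h1 : i = u.1 ∧ n = u.2 := by by_contra h; rw [if_neg h] at hu; exact hu rfl
    have h2 := u.2.2
    rw [← h1.2] at h2
    have h3 : (n : ℤ) < (Wc - wt q k i) / d + 1 := by
      rw [h1.1]; exact Int.lt_toNat.1 h2
    rw [← hd]
    calc (d : ℤ) * n ≤ d * ((Wc - wt q k i) / d) := by gcongr; omega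
      _ ≤ _ := Int.mul_ediv_self_le hdp.ne'
  · intro b hb j hj m l' hm hl'
    have hm' : m < A ⟨b, hb⟩ := by
      have : (m : ℤ) + 1 ≤ (V + wt q k b) / d := by
        rw [Int.le_ediv_iff_mul_le hdp]; linarith
      exact Int.lt_toNat.2 (by simpa using this)
    have hl : l' < B ⟨j, hj⟩ := by
      have : (l' : ℤ) + 1 ≤ (wt q k j + 1) / d := by
        rw [Int.le_ediv_iff_mul_le hdp]; linarith
      exact Int.lt_toNat.2 (by simpa using this)
    have := congrFun (LinearMap.mem_ker.1 hx) (⟨⟨b, hb⟩, ⟨m, hm'⟩⟩, ⟨⟨j, hj⟩, ⟨l', hl⟩⟩)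
    exact this

end aux

/-! ### Existence of a rational point -/

section core
variable {K : Type} [Field K] {p e q k : ℕ} [Fact p.Prime] [CharP K p]

/-- The functions `aa l j` in the expansion
`∑ l j, T' ^ l * s' ^ ⌈j / q⌉ * ζ' ^ j * aa l j` of
`c' * ∑ b, hatA b * (s' ^ ⌈b / q⌉ * ζ' ^ b) ^ r`, where primed symbols refer to the curve
with coefficients `φ'` and `T' ^ r = T`. -/
noncomputable def aa (q k r : ℕ) (φ φ' : ℕ → K) (c : ℕ → K[X]) (l j : ℕ) : ℕ → K[X] := fun i =>
  ∑ b ∈ range (q ^ k - 1),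
    sec r l (mulmono q k φ' c (r * mm q b) (r * b) j) * hatA q k φ b i

omit [CharP K p] [Fact p.Prime] in
lemma ev_aa (r : ℕ) (φ φ' : ℕ → K) (c : ℕ → K[X]) (l j : ℕ) (ψ : K[X] →+* K) (ζ : K) :
    ev q k ψ ζ (aa q k r φ φ' c l j) = ∑ b ∈ range (q ^ k - 1),
      ψ (sec r l (mulmono q k φ' c (r * mm q b) (r * b) j)) * ev q k ψ ζ (hatA q k φ b) := by
  unfold aa
  rw [ev_sum]
  exact sum_congr rfl fun b _ => ev_smul _ _ _ _

/-- The defining expansion of the functions `aa l j`, evaluated at a pair of points. -/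
lemma aa_expansion (h2 : 2 ≤ q) (hk : 2 ≤ k) {φ φ' : ℕ → K} (c : ℕ → K[X]) {r m : ℕ}
    (hr : r = p ^ m) {t' ζ' : K} (hc : OnCurve q k φ' (evalRingHom t') ζ') (z : K) :
    ∑ l ∈ range r, ∑ j ∈ range (q ^ k - 1), t' ^ l * (eval t' (ss K q) ^ mm q j * ζ' ^ j) *
        ev q k (evalRingHom (t' ^ r)) z (aa q k r φ φ' c l j) =
      ev q k (evalRingHom t') ζ' c * ∑ b ∈ range (q ^ k - 1),
        ev q k (evalRingHom (t' ^ r)) z (hatA q k φ b) *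
          (evalRingHom (t' ^ r) (ss K q) ^ mm q b * (ζ' ^ r) ^ b) := by
  have hr0 : 0 < r := by rw [hr]; exact pow_pos (Fact.out : p.Prime).pos _
  have e1 : ∀ b ∈ range (q ^ k - 1), ev q k (evalRingHom t') ζ' c *
      (ev q k (evalRingHom (t' ^ r)) z (hatA q k φ b) *
          (evalRingHom (t' ^ r) (ss K q) ^ mm q b * (ζ' ^ r) ^ b)) =
      ∑ l ∈ range r, ∑ j ∈ range (q ^ k - 1), t' ^ l * (eval t' (ss K q) ^ mm q j * ζ' ^ j) *
        (eval (t' ^ r) (sec r l (mulmono q k φ' c (r * mm q b) (r * b) j)) *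
          ev q k (evalRingHom (t' ^ r)) z (hatA q k φ b)) := by
    intro b _
    have h1 := mulmono_ev h2 hk c (mm_mul_le h2 r b) hc
    rw [coe_evalRingHom] at h1 ⊢
    calc _ = ev q k (evalRingHom t') ζ' c * (eval t' (ss K q) ^ (r * mm q b) * ζ' ^ (r * b)) *
          ev q k (evalRingHom (t' ^ r)) z (hatA q k φ b) := by
          rw [hr, eval_ss_pow, pow_mul, pow_mul]; ring
      _ = _ := by
          rw [← h1, sum_comm]
          conv_lhs => enter [1]; unfold ev
          rw [sum_mul]
          refine sum_congr rfl fun j _ => ?_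
          rw [coe_evalRingHom, ← eval_sec hr0 (mulmono q k φ' c _ _ j), sum_mul, sum_mul, sum_mul]
          exact sum_congr rfl fun l _ => by ring
  rw [mul_sum, sum_congr rfl e1]
  symm
  rw [sum_comm]
  refine sum_congr rfl fun l _ => ?_
  rw [sum_comm]
  refine sum_congr rfl fun j _ => ?_
  rw [ev_aa, mul_sum]
  rfl

omit [CharP K p] [Fact p.Prime] in
/-- Monomials of a section, bounded by the weight of the product it comes from. -/
lemma PB_sec {r : ℕ} (h2 : 2 ≤ q) (hk : 2 ≤ k) (hr : 0 < r) {φ' : ℕ → K} {c : ℕ → K[X]} {V : ℤ}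
    (hc : Bd q k c (r * V)) (l : ℕ) {b j : ℕ} (hj : j < q ^ k - 1) {m : ℕ}
    (hm : (sec r l (mulmono q k φ' c (r * mm q b) (r * b) j)).coeff m ≠ 0) :
    ((q : ℤ) ^ k - 1) * (r * m + l) + wt q k j ≤ r * (V + wt q k b) := by
  rw [coeff_sec hr] at hm
  have h1 := mulmono_Bd h2 hk φ' (mm_mul_le h2 r b) hc j hj _ hm
  rw [dd_cast h2] at h1
  push_cast at h1
  have h3 : (r : ℤ) * wt q k b = (q ^ k - 1) * (q * (r * mm q b)) -
      r * b * (q ^ k - q ^ (k - 1)) := by unfold wt; ring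
  linarith

omit [CharP K p] [Fact p.Prime] in
lemma aa_Bd {r : ℕ} (h2 : 2 ≤ q) (hk : 2 ≤ k) (hr : 0 < r) {φ φ' : ℕ → K} {c : ℕ → K[X]} {V : ℤ}
    (hc : Bd q k c (r * V)) (l : ℕ) {j : ℕ} (hj : j < q ^ k - 1) :
    Bd q k (aa q k r φ φ' c l j) (kap q k + V) := by
  intro i hi
  refine PB.sum _ _ fun b _ => ?_
  have h1 : PB (q ^ k - 1) (sec r l (mulmono q k φ' c (r * mm q b) (r * b) j))
      (V + wt q k b) := by
    intro m hm
    have h1 := PB_sec h2 hk hr hc l hj hm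
    have h3 := wt_nonneg (k := k) h2 j
    rw [dd_cast h2]
    have hd0 : (0 : ℤ) ≤ q ^ k - 1 := by rw [← dd_cast h2]; positivity
    have hl : (0 : ℤ) ≤ ((q : ℤ) ^ k - 1) * l := by positivity
    have hr' : (0 : ℤ) < r := by exact_mod_cast hr
    have : (r : ℤ) * (((q : ℤ) ^ k - 1) * m) ≤ r * (V + wt q k b) := by linarith
    exact le_of_mul_le_mul_left this hr'
  refine (h1.mul (hatA_Bd h2 hk φ b i hi)).mono (le_of_eq ?_)
  ring

omit [CharP K p] [Fact p.Prime] in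
/-- The pairs `(l, j)` of the largest weights do not contribute, by the choice of `c`. -/
lemma aa_eq_zero {r : ℕ} (h2 : 2 ≤ q) (hk : 2 ≤ k) (hr : 2 ≤ r) {φ φ' : ℕ → K} {c : ℕ → K[X]}
    {V : ℤ} (hc : Bd q k c (r * V))
    (hz : ∀ b < q ^ k - 1, ∀ j < q ^ k - 1, ∀ m l' : ℕ,
      ((q : ℤ) ^ k - 1) * (m + 1) ≤ V + wt q k b →
      ((q : ℤ) ^ k - 1) * (l' + 1) ≤ wt q k j + 1 →
      (mulmono q k φ' c (r * mm q b) (r * b) j).coeff (r * m + (r - 1 - l')) = 0)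
    {l : ℕ} (hl : l < r) {j : ℕ} (hj : j < q ^ k - 1)
    (hbad : ((q : ℤ) ^ k - 1) * r - 1 ≤ (q ^ k - 1) * l + wt q k j) :
    aa q k r φ φ' c l j = 0 := by
  funext i
  refine Finset.sum_eq_zero fun b hb => ?_
  rw [mem_range] at hb
  suffices h : sec r l (mulmono q k φ' c (r * mm q b) (r * b) j) = 0 by rw [h, zero_mul]
  ext m
  by_contra hm
  rw [coeff_zero] at hm
  have h1 := PB_sec h2 hk (by omega) hc l hj hm
  have hr' : (2 : ℤ) ≤ r := by exact_mod_cast hr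
  refine hm ?_
  rw [coeff_sec (by omega)]
  have := hz b hb j hj m (r - 1 - l) ?_ ?_
  · rwa [show r - 1 - (r - 1 - l) = l by omega] at this
  · have : (r : ℤ) * (((q : ℤ) ^ k - 1) * (m + 1) - (V + wt q k b)) ≤ 1 := by linarith
    by_contra hcon
    nlinarith
  · rw [Nat.cast_sub (by omega), Nat.cast_sub (by omega)]
    push_cast
    linarith

/-- The coordinate vector of `∑ l j, (T ^ l * s ^ ⌈j / q⌉ * ζ ^ j) ^ r' * a l j`. -/
noncomputable def bigPhi (q k r r' : ℕ) (φ : ℕ → K) (a : ℕ → ℕ → ℕ → K[X]) : ℕ → K[X] := fun i =>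
  ∑ l ∈ range r, ∑ j ∈ range (q ^ k - 1),
    X ^ (l * r') * mulmono q k φ (a l j) (r' * mm q j) (r' * j) i

omit [CharP K p] [Fact p.Prime] in
lemma ev_bigPhi (h2 : 2 ≤ q) (hk : 2 ≤ k) (r r' : ℕ) {φ : ℕ → K} (a : ℕ → ℕ → ℕ → K[X])
    {B : Type} [CommRing B] {ψ : K[X] →+* B} {ζ : B} (hc : OnCurve q k φ ψ ζ) :
    ev q k ψ ζ (bigPhi q k r r' φ a) = ∑ l ∈ range r, ∑ j ∈ range (q ^ k - 1),
      (ψ X ^ r') ^ l * ((ψ (ss K q) ^ r') ^ mm q j * (ζ ^ r') ^ j) * ev q k ψ ζ (a l j) := by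
  unfold bigPhi
  rw [ev_sum]
  refine sum_congr rfl fun l _ => ?_
  rw [ev_sum]
  refine sum_congr rfl fun j _ => ?_
  rw [ev_smul, mulmono_ev h2 hk _ (mm_mul_le h2 r' j) hc, map_pow, ← pow_mul, ← pow_mul,
    ← pow_mul, mul_comm l r']
  ring

omit [CharP K p] [Fact p.Prime] in
lemma bigPhi_Bd (h2 : 2 ≤ q) (hk : 2 ≤ k) {r r' : ℕ} {φ : ℕ → K} {a : ℕ → ℕ → ℕ → K[X]} {w β : ℤ}
    (ha : ∀ l < r, ∀ j < q ^ k - 1, Bd q k (a l j) w)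
    (h0 : ∀ l < r, ∀ j < q ^ k - 1, β < (q ^ k - 1) * l + wt q k j → a l j = 0) :
    Bd q k (bigPhi q k r r' φ a) (w + r' * β) := by
  intro i hi
  refine PB.sum _ _ fun l hl => PB.sum _ _ fun j hj => ?_
  rw [mem_range] at hl hj
  by_cases h : β < (q ^ k - 1) * l + wt q k j
  · rw [h0 l hl j hj h]
    have : mulmono q k φ 0 (r' * mm q j) (r' * j) i = 0 := by unfold mulmono; simp
    rw [this, mul_zero]
    exact PB.zero
  · push Not at h
    have h1 := mulmono_Bd h2 hk φ (mm_mul_le h2 r' j) (ha l hl j hj) i hi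
    refine ((PB.Xpow (l * r') le_rfl).mul h1).mono ?_
    rw [dd_cast h2]
    have h3 : (r' : ℤ) * ((q ^ k - 1) * l + wt q k j) ≤ r' * β := by gcongr
    unfold wt at h3 ⊢
    push_cast
    linarith

/-- The numerical inequalities needed for the degree comparisons. -/
lemma core_num (h2 : 2 ≤ q) (hk : 3 ≤ k) :
    kap q k + q ^ (2 * k - 2) < q ^ (2 * k) ∧
    kap q k + q ^ (2 * k - 2) + (q ^ k - 1) * q ^ (k - 1) < 2 * q ^ (2 * k) := by
  have e1 : (q : ℤ) ^ (2 * k - 2) = (q ^ (k - 1)) ^ 2 := by rw [← pow_mul]; congr 1; omega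
  have e2 : (q : ℤ) ^ (2 * k) = q ^ 2 * (q ^ (k - 1)) ^ 2 := by
    rw [← pow_mul, ← pow_add]; congr 1; omega
  have e3 : (q : ℤ) ^ k = q * q ^ (k - 1) := by rw [← pow_succ']; congr 1; omega
  have hY : (q : ℤ) ^ 2 ≤ q ^ (k - 1) := by
    exact_mod_cast Nat.pow_le_pow_right (by omega) (by omega)
  unfold kap
  rw [e1, e2, e3]
  generalize (q : ℤ) ^ (k - 1) = Y at *
  have hq' : (2 : ℤ) ≤ q := by exact_mod_cast h2
  generalize (q : ℤ) = q at *
  have hY4 : 4 ≤ Y := by nlinarith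
  have a1 : q ^ 2 * Y ≤ Y ^ 2 := by nlinarith
  have a2 : (q - 2) * Y ≤ (q - 2) * Y ^ 2 := by
    have : 0 ≤ q - 2 := by linarith
    have : Y ≤ Y ^ 2 := by nlinarith
    gcongr
  have a3 : 2 * q * Y ^ 2 ≤ q ^ 2 * Y ^ 2 := by
    have : 2 * q ≤ q ^ 2 := by nlinarith
    gcongr
  have a4 : 2 * Y ^ 2 ≤ q * Y ^ 2 := by gcongr
  constructor
  · nlinarith
  · nlinarith

omit [CharP K p] [Fact p.Prime] in
lemma PB.C_mul {d : ℕ} (a : K) {P : K[X]} {w : ℤ} (h : PB d P w) : PB d (Polynomial.C a * P) w := by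
  have := (PB.C (d := d) (w := 0) a le_rfl).mul h
  rwa [zero_add] at this

lemma eval_ss_hh_ne (hq : q = p ^ e) (he : 0 < e) {t : K} (ht : t ^ q ^ (k - 1) ≠ t) :
    eval t (ss K q) ≠ 0 ∧ eval t (hh K q (k - 1)) ≠ 0 := by
  have h1 := congrArg (eval t) (ss_mul_hh (K := K) hq he (k - 1))
  rw [eval_mul, eval_sub, eval_pow, eval_X] at h1
  rw [← mul_ne_zero_iff, h1]
  exact sub_ne_zero.2 ht

omit [CharP K p] [Fact p.Prime] in
lemma ev_eq_zero {B : Type} [CommRing B] (ψ : K[X] →+* B) (ζ : B) {v : ℕ → K[X]}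
    (h : ∀ j < q ^ k - 1, ψ (v j) = 0) : ev q k ψ ζ v = 0 :=
  Finset.sum_eq_zero fun j hj => by rw [h j (mem_range.1 hj), zero_mul, zero_mul]

/-- The curve has a point fixed by the `q ^ n`-th power map over one of the elements of `S`. -/
theorem core [IsAlgClosed K] (hq : q = p ^ e) (he : 0 < e) (hk : 3 ≤ k) {n : ℕ} (hn : 4 * k ≤ n)
    {φ : ℕ → K} (hφ : φ k ≠ 0) (hφQ : ∀ i, φ i ^ q ^ n = φ i) (S : Finset K)
    (hS : ∀ t ∈ S, t ^ q ^ n = t ∧ t ^ q ^ (k - 1) ≠ t) (hcard : q ^ n ≤ #S + q ^ (k - 1)) :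
    ∃ t ∈ S, ∃ ζ : K, ζ ^ q ^ n = ζ ∧ OnCurve q k φ (evalRingHom t) ζ := by
  by_contra! hno
  have h2 := two_le_q he hq
  have hk2 : 2 ≤ k := by omega
  obtain ⟨r, hr⟩ : ∃ r, r = q ^ (2 * k) := ⟨_, rfl⟩
  obtain ⟨r', hr'⟩ : ∃ r', r' = q ^ (n - 2 * k) := ⟨_, rfl⟩
  have hrp : r = p ^ (e * (2 * k)) := by rw [hr, hq, ← pow_mul]
  have hrp' : r' = p ^ (e * (n - 2 * k)) := by rw [hr', hq, ← pow_mul]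
  have hrr : r' * r = q ^ n := by rw [hr, hr', ← pow_add]; congr 1; omega
  have hrle : r ≤ r' := by rw [hr, hr']; exact Nat.pow_le_pow_right (by omega) (by omega)
  have hr2 : 2 ≤ r := by rw [hr]; exact h2.trans (Nat.le_self_pow (by omega) q)
  obtain ⟨φ', hφ'⟩ : ∃ φ' : ℕ → K, φ' = fun i => φ i ^ r' := ⟨_, rfl⟩
  obtain ⟨c, hc0, hcB, hcz⟩ := exists_aux h2 hk φ'
  have hrz : (r : ℤ) = q ^ (2 * k) := by rw [hr]; push_cast; rfl
  rw [← hr] at hcz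
  rw [← hrz] at hcB
  obtain ⟨V, hV⟩ : ∃ V : ℤ, V = q ^ (2 * k - 2) := ⟨_, rfl⟩
  obtain ⟨hA, hB⟩ := core_num h2 hk
  rw [← hV] at hcB hcz hA hB
  rw [← hrz] at hA hB
  have hrlez : (r : ℤ) ≤ r' := by exact_mod_cast hrle
  have haB : ∀ l < r, ∀ j < q ^ k - 1, Bd q k (aa q k r φ φ' c l j) (kap q k + V) :=
    fun l _ j hj => aa_Bd h2 hk2 (by omega) hcB l hj
  have hPB := bigPhi_Bd (r' := r') (φ := φ) h2 hk2 haB (β := (q ^ k - 1) * r - 2)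
    (fun l hl j hj h => aa_eq_zero h2 hk2 hr2 hcB hcz hl hj (by linarith))
  obtain ⟨Φ, hΦ⟩ : ∃ Φ, Φ = bigPhi q k r r' φ (aa q k r φ φ' c) := ⟨_, rfl⟩
  rw [← hΦ] at hPB
  -- the point `(t ^ r', ζ ^ r')` of the curve for `φ'`
  have hpt : ∀ {t ζ : K}, OnCurve q k φ (evalRingHom t) ζ →
      OnCurve q k φ' (evalRingHom (t ^ r')) (ζ ^ r') := by
    intro t ζ h
    have := h.pow (p := p) (e * (n - 2 * k))
    rwa [← hrp', ← hφ'] at this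
  have hev0 : ∀ t ∈ S, ∀ ζ : K, OnCurve q k φ (evalRingHom t) ζ →
      ev q k (evalRingHom t) ζ Φ = 0 := by
    intro t ht ζ hζ
    have htQ := (hS t ht).1
    have hη : OnCurve q k φ (evalRingHom t) (ζ ^ q ^ n) := by
      have := hζ.pow (p := p) (e * n)
      rw [pow_mul p e n, ← hq, htQ] at this
      simpa only [hφQ] using this
    have hne : ζ ≠ ζ ^ q ^ n := fun h => hno t ht ζ h.symm hζ
    have h1 := aa_expansion (φ := φ) h2 hk2 c hrp (hpt hζ) ζ
    rw [← pow_mul t, ← pow_mul ζ r' r, hrr, htQ, hatA_offdiag h2 hk2 hζ hη hne, mul_zero] at h1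
    rw [hΦ, ev_bigPhi h2 hk2 r r' _ hζ, ← h1]
    simp only [coe_evalRingHom, eval_X]
    rw [hrp', eval_ss_pow]
  have hΦ0 : ∀ j < q ^ k - 1, Φ j = 0 := by
    intro j hj
    by_contra hne
    have h1 := (hPB j hj).natDegree hne
    have hroot : S.val ⊆ (Φ j).roots := by
      intro t ht
      rw [mem_roots hne, IsRoot]
      obtain ⟨hs, hh0⟩ := eval_ss_hh_ne hq he (hS t ht).2
      exact vanish hk2 hq he hφ hs hh0 (hev0 t ht) j hj
    have h3 : #S ≤ (Φ j).natDegree :=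
      (Multiset.card_le_card ((Multiset.le_iff_subset S.nodup).2 hroot)).trans (card_roots' _)
    have h4 : ((q : ℤ) ^ n) ≤ (Φ j).natDegree + q ^ (k - 1) := by
      exact_mod_cast hcard.trans (by omega)
    have h5 := wt_nonneg (k := k) h2 j
    rw [dd_cast h2] at h1
    have h6 : (r' : ℤ) * r = q ^ n := by exact_mod_cast hrr
    have hd0 : (0 : ℤ) ≤ q ^ k - 1 := by rw [← dd_cast h2]; positivity
    have h7 := mul_le_mul_of_nonneg_left h4 hd0
    rw [← h6] at h7
    linarith
  -- the auxiliary function vanishes at all points in the image of the `r'`-th power map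
  have hvan : ∀ t z : K, eval t (ss K q) ≠ 0 → eval t (hh K q (k - 1)) ≠ 0 →
      OnCurve q k φ (evalRingHom t) z → ev q k (evalRingHom (t ^ r')) (z ^ r') c = 0 := by
    intro t z hs hh0 hz
    obtain ⟨B, _, ψ, ζ, hψ, hζ, hψp, hζp⟩ := exists_jet hq he hk2 hφ hs hh0 hz (e * (n - 2 * k))
    rw [← hrp'] at hψ hψp hζp
    have h1 := ev_bigPhi h2 hk2 r r' (aa q k r φ φ' c) hζ
    rw [← hΦ, ev_eq_zero ψ ζ (fun j hj => by rw [hΦ0 j hj, map_zero])] at h1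
    obtain ⟨G, hG⟩ : ∃ G : ℕ → K[X], G = fun i => ∑ l ∈ range r, ∑ j ∈ range (q ^ k - 1),
        C ((t ^ r') ^ l * ((eval t (ss K q) ^ r') ^ mm q j * (z ^ r') ^ j)) *
          aa q k r φ φ' c l j i := ⟨_, rfl⟩
    have h3 : ev q k ψ ζ G = 0 := by
      rw [h1, hG, ev_sum]
      refine sum_congr rfl fun l _ => ?_
      rw [ev_sum]
      refine sum_congr rfl fun j _ => ?_
      rw [ev_smul, hψp, hψp, hζp, eval_X]
      simp only [map_mul, map_pow]
    have hB' : Bd q k G (kap q k + V) := by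
      intro i hi
      rw [hG]
      refine PB.sum _ _ fun l hl => PB.sum _ _ fun j hj => ?_
      rw [mem_range] at hl hj
      exact PB.C_mul _ (haB l hl j hj i hi)
    have h4 := eq_zero_of_jet hq he hk hφ hB' (hA.trans_le hrlez) hψ hζ h3
    have h5 := aa_expansion (φ := φ) h2 hk2 c hrp (hpt hz) ((z ^ r') ^ r)
    rw [hatA_diag hq he hk2] at h5
    have h6 := ev_eq_zero (evalRingHom ((t ^ r') ^ r)) ((z ^ r') ^ r) (q := q) (k := k) (v := G)
      (fun j hj => by rw [h4 j hj, map_zero])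
    rw [hG, ev_sum] at h6
    have h7 : eval (t ^ r') (ss K q) = eval t (ss K q) ^ r' := by rw [hrp', eval_ss_pow]
    have h8 : eval ((t ^ r') ^ r) (ss K q) = (eval t (ss K q) ^ r') ^ r := by
      rw [hrp, eval_ss_pow, h7]
    have hz0 := hz.ne_zero hk2 h2 hφ hh0
    have h9 : ev q k (evalRingHom (t ^ r')) (z ^ r') c *
        -(evalRingHom ((t ^ r') ^ r) (ss K q) ^ (q ^ (k - 1) + 1) *
          ((z ^ r') ^ r) ^ (q ^ k - 1 - 1)) = 0 := by
      rw [← h5, ← h6]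
      refine sum_congr rfl fun l _ => ?_
      rw [ev_sum]
      refine sum_congr rfl fun j _ => ?_
      rw [ev_smul, coe_evalRingHom, eval_C, h7]
    refine (mul_eq_zero.1 h9).resolve_right ?_
    rw [coe_evalRingHom, h8]
    exact neg_ne_zero.2 (mul_ne_zero (pow_ne_zero _ (pow_ne_zero _ (pow_ne_zero _ hs)))
      (pow_ne_zero _ (pow_ne_zero _ (pow_ne_zero _ hz0))))
  obtain ⟨j, hj, hcj⟩ := hc0
  have hr0 : 0 < r' := by omega
  have hprod : c j * (X ^ q ^ (k - 1) - X) = 0 := by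
    refine Polynomial.funext fun t' => ?_
    rw [eval_mul, eval_zero, eval_sub, eval_pow, eval_X]
    by_cases ht' : t' ^ q ^ (k - 1) = t'
    · rw [ht', sub_self, mul_zero]
    · obtain ⟨hs, hh0⟩ := eval_ss_hh_ne hq he ht'
      obtain ⟨t, rfl⟩ := IsAlgClosed.exists_pow_nat_eq t' hr0
      have ht : t ^ q ^ (k - 1) ≠ t := by
        intro h
        apply ht'
        rw [← pow_mul, mul_comm, pow_mul, h]
      obtain ⟨hs1, hh1⟩ := eval_ss_hh_ne hq he ht
      have hφk : φ' k ≠ 0 := by rw [hφ']; exact pow_ne_zero _ hφ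
      rw [vanish hk2 hq he hφk hs hh0 (v := c) ?_ j hj, zero_mul]
      intro ζ' hζ'
      obtain ⟨z, rfl⟩ := IsAlgClosed.exists_pow_nat_eq ζ' hr0
      refine hvan t z hs1 hh1 (OnCurve.of_pow (p := p) (m := e * (n - 2 * k)) ?_)
      rw [← hrp', ← hφ']
      exact hζ'
  have hne : (X ^ q ^ (k - 1) - X : K[X]) ≠ 0 := by
    rw [← ss_mul_hh hq he]
    exact mul_ne_zero (ss_ne_zero h2) (hh_natDegree hq he (by omega)).1
  exact hcj ((mul_eq_zero.1 hprod).resolve_right hne)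

end core

/-! ### From a point of the curve to a pair of field elements -/

section final
variable {L : Type} [Field L] {p e q k : ℕ} [Fact p.Prime] [CharP L p]

/-- A point `(t, ζ)` of the curve, with coefficients `φ i`, gives a solution `x` of an equation
whose coefficients are the `φ i ^ q`. -/
lemma OnCurve.solution (hq : q = p ^ e) (he : 0 < e) {φ : ℕ → L} {t ζ : L}
    (hs : t ^ q - t ≠ 0) (hζ : ζ ≠ 0) (h : OnCurve q k φ (evalRingHom t) ζ) {x : L}
    (hx : x = (ζ⁻¹) ^ q * (t ^ q - t)⁻¹) :
    x * (t ^ q - t) = ∑ i ∈ Icc 2 k, φ i ^ q * (t ^ q ^ i - t ^ q) * x ^ q ^ i := by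
  have h2 := two_le_q he hq
  have hss : eval t (ss L q) = t ^ q - t := by simp [ss]
  have hhh : ∀ i, (t ^ q - t) * eval t (hh L q i) = t ^ q ^ i - t := by
    intro i
    have h1 := congrArg (eval t) (ss_mul_hh (K := L) hq he i)
    rwa [eval_mul, eval_sub, eval_pow, eval_X, hss] at h1
  have hy : ζ⁻¹ = ∑ i ∈ Icc 2 k, φ i * (t ^ q ^ (i - 1) - t) * ((t ^ q - t)⁻¹) ^ q ^ (i - 1) *
      (ζ⁻¹) ^ q ^ i := by
    unfold OnCurve at h
    simp only [coe_evalRingHom, eval_mul, eval_C, hss] at h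
    obtain ⟨s, hs'⟩ : ∃ s, s = t ^ q - t := ⟨_, rfl⟩
    simp only [← hs'] at h hs hhh ⊢
    have hp1 : ∀ a, 1 ≤ q ^ a := fun a => Nat.one_le_pow _ _ (by omega)
    have h3 := congrArg (fun u => s * u * (s⁻¹) ^ q ^ (k - 1) * (ζ⁻¹) ^ q ^ k) h
    beta_reduce at h3
    have h4 : s * (s ^ (q ^ (k - 1) - 1) * ζ ^ (q ^ k - 1)) * (s⁻¹) ^ q ^ (k - 1) *
        (ζ⁻¹) ^ q ^ k = ζ⁻¹ := by
      rw [pow_sub₀ _ hs (hp1 _), pow_sub₀ _ hζ (hp1 _), inv_pow, inv_pow]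
      field_simp
    rw [h4, mul_sum, sum_mul, sum_mul] at h3
    refine h3.trans (sum_congr rfl fun i hi => ?_)
    rw [mem_Icc] at hi
    rw [← hhh, pow_sub₀ _ hs (Nat.pow_le_pow_right (by omega) (by omega)),
      pow_sub₀ _ hζ (Nat.pow_le_pow_right (by omega) hi.2)]
    simp only [inv_pow]
    field_simp
  have h5 := congrArg (· ^ q) hy
  beta_reduce at h5
  have h6 : x * (t ^ q - t) = (ζ⁻¹) ^ q := by rw [hx]; field_simp
  rw [h6, h5]
  rw [show (∑ i ∈ Icc 2 k, φ i * (t ^ q ^ (i - 1) - t) * ((t ^ q - t)⁻¹) ^ q ^ (i - 1) *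
      (ζ⁻¹) ^ q ^ i) ^ q = ∑ i ∈ Icc 2 k, (φ i * (t ^ q ^ (i - 1) - t) *
      ((t ^ q - t)⁻¹) ^ q ^ (i - 1) * (ζ⁻¹) ^ q ^ i) ^ q by
    rw [hq, sum_pow_char_pow]]
  refine sum_congr rfl fun i hi => ?_
  rw [mem_Icc] at hi
  have hqi : q ^ (i - 1) * q = q ^ i := by rw [← pow_succ]; congr 1; omega
  have h7 : (t ^ q ^ (i - 1) - t) ^ q = t ^ q ^ i - t ^ q := by
    rw [← hqi, pow_mul]
    rw [hq, sub_pow_char_pow]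
  rw [mul_pow, mul_pow, mul_pow, h7, ← pow_mul _ (q ^ (i - 1)) q, hqi, hx, mul_pow,
    ← pow_mul _ (q ^ i) q, ← pow_mul _ q (q ^ i), mul_comm q (q ^ i)]
  ring

/-- The curve has a point over a finite field with `q ^ n` elements. -/
lemma exists_solution {F : Type} [Field F] [Fintype F] [CharP F p] {n : ℕ} (hq : q = p ^ e)
    (he : 0 < e) (hk : 3 ≤ k) (hn : 4 * k ≤ n) (hF : Fintype.card F = q ^ n) {b : ℕ → F}
    (hb : b k ≠ 0) : ∃ t x : F, t ^ q ≠ t ∧ x ≠ 0 ∧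
      x * (t ^ q - t) = ∑ i ∈ Icc 2 k, b i * (t ^ q ^ i - t ^ q) * x ^ q ^ i := by
  classical
  have h2 := two_le_q he hq
  have hroot : ∀ i, ∃ c : F, c ^ q = b i := by
    intro i
    have hbij : Function.Bijective (iterateFrobenius F p e) :=
      Finite.injective_iff_bijective.1 (RingHom.injective _)
    obtain ⟨c, hc⟩ := hbij.2 (b i)
    exact ⟨c, by rw [hq, ← hc, iterateFrobenius_def]⟩
  choose c hc using hroot
  let K := AlgebraicClosure F
  have hinj := (algebraMap F K).injective
  have : CharP K p := charP_of_injective_algebraMap hinj p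
  have hfix : ∀ a : F, a ^ q ^ n = a := fun a => by rw [← hF, FiniteField.pow_card]
  have hck : c k ≠ 0 := by
    intro h0
    apply hb
    rw [← hc, h0, zero_pow (by omega)]
  obtain ⟨t', ht', ζ', hζ', hcurve⟩ := core (K := K) (n := n) hq he hk hn
    (φ := fun i => algebraMap F K (c i)) (by simpa using hck)
    (fun i => by rw [← map_pow, hfix])
    ((univ.filter fun t : F => t ^ q ^ (k - 1) ≠ t).image (algebraMap F K))
    (by
      intro t ht
      rw [mem_image] at ht
      obtain ⟨t, ht, rfl⟩ := ht
      rw [mem_filter] at ht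
      rw [← map_pow, ← map_pow, hfix]
      exact ⟨rfl, fun h => ht.2 (hinj h)⟩)
    (by
      rw [card_image_of_injective _ hinj]
      have h1 := card_filter_add_card_filter_not (s := (univ : Finset F)) (fun t : F => t ^ q ^ (k - 1) ≠ t)
      rw [card_univ, hF] at h1
      rw [← h1]
      have hM : 1 < q ^ (k - 1) := Nat.one_lt_pow (by omega) (by omega)
      have hne := FiniteField.X_pow_card_sub_X_ne_zero F hM
      have hdeg := FiniteField.X_pow_card_sub_X_natDegree_eq F hM
      have h3 : (univ.filter fun t : F => ¬ t ^ q ^ (k - 1) ≠ t).val ⊆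
          (X ^ q ^ (k - 1) - X : F[X]).roots := by
        intro t ht
        have ht : t ^ q ^ (k - 1) = t := by simpa using ht
        rw [mem_roots hne]
        simp [ht]
      have h4 := (Multiset.card_le_card ((Multiset.le_iff_subset (nodup _)).2 h3)).trans
        (card_roots' _)
      rw [hdeg] at h4
      exact Nat.add_le_add_left h4 _)
  rw [mem_image] at ht'
  obtain ⟨t, ht, rfl⟩ := ht'
  have ht : t ^ q ^ (k - 1) ≠ t := (mem_filter.1 ht).2
  have htK : (algebraMap F K t) ^ q ^ (k - 1) ≠ algebraMap F K t := by
    rw [← map_pow]; exact fun h => ht (hinj h)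
  obtain ⟨hs, hh0⟩ := eval_ss_hh_ne hq he htK
  have hφk : (fun i => algebraMap F K (c i)) k ≠ 0 := by simpa using hck
  have hζ0 := hcurve.ne_zero (by omega) h2 hφk hh0
  have htq : t ^ q - t ≠ 0 := by
    intro h0
    apply hs
    simp only [ss, eval_sub, eval_pow, eval_X]
    rw [← map_pow, ← map_sub, h0, map_zero]
  obtain ⟨z, rfl⟩ : ∃ z, algebraMap F K z = ζ' := by
    have hM : 1 < q ^ n := Nat.one_lt_pow (by omega) (by omega)
    have hne := FiniteField.X_pow_card_sub_X_ne_zero K hM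
    have hdeg := FiniteField.X_pow_card_sub_X_natDegree_eq K hM
    have h3 : ((univ : Finset F).image (algebraMap F K)).val ⊆
        (X ^ q ^ n - X : K[X]).roots := by
      intro a ha
      have ha : a ∈ (univ : Finset F).image (algebraMap F K) := ha
      rw [mem_image] at ha
      obtain ⟨a, -, rfl⟩ := ha
      rw [mem_roots hne]
      simp [← map_pow, hfix]
    have h4 := Multiset.eq_of_le_of_card_le ((Multiset.le_iff_subset (nodup _)).2 h3) (by
      refine (card_roots' _).trans ?_
      rw [hdeg, ← hF, ← card_univ]
      exact (card_image_of_injective _ hinj).ge)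
    have h5 : ζ' ∈ (X ^ q ^ n - X : K[X]).roots := by
      rw [mem_roots hne]; simp [hζ']
    rw [← h4] at h5
    have h5 : ζ' ∈ (univ : Finset F).image (algebraMap F K) := h5
    rw [mem_image] at h5
    obtain ⟨a, -, rfl⟩ := h5
    exact ⟨a, rfl⟩
  have hz : z ≠ 0 := by rintro rfl; exact hζ0 (map_zero _)
  refine ⟨t, (z⁻¹) ^ q * (t ^ q - t)⁻¹, sub_ne_zero.1 htq,
    mul_ne_zero (pow_ne_zero _ (inv_ne_zero hz)) (inv_ne_zero htq), hinj ?_⟩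
  have h6 := hcurve.solution hq he
    (fun h => htq (hinj (by rw [map_sub, map_pow, map_zero]; exact h))) hζ0 rfl
  simp only [← map_pow, ← map_sub, ← map_mul, ← map_inv₀, ← map_sum, hc] at h6
  exact h6

end final

end Scat

/-- for 3 ≤ k ≤ n/4, λ ≠ 0 and f(X) = X + Σ_{j=1}^{k−1} α_j X^{q^j} + λX^{q^k},
there exist nonzero x, y ∈ 𝔽_{q^n} with y/x ∉ 𝔽_q and f(x)·y^q = f(y)·x^q; in particular
f is not scattered of index 1. Membership of z in 𝔽_q is expressed as z^q = z. -/
theorem stmt_9 (p r q n k : ℕ) (hp : p.Prime) (hr : 0 < r) (hq : q = p ^ r)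
    (hn : 0 < n) (hk : 3 ≤ k) (hkn : 4 * k ≤ n)
    (F : Type) [Field F] [Fintype F] (hF : Fintype.card F = q ^ n)
    (lam : F) (hlam : lam ≠ 0) (α : ℕ → F)
    (φ : Polynomial F)
    (hφ : φ = ∑ j ∈ Finset.Ico 1 k, Polynomial.C (α j) * Polynomial.X ^ q ^ j)
    (f : Polynomial F)
    (hfdef : f = Polynomial.X + φ + Polynomial.C lam * Polynomial.X ^ q ^ k) :
    (∃ x y : F, x ≠ 0 ∧ y ≠ 0 ∧ (y / x) ^ q ≠ y / x ∧
        Polynomial.eval x f * y ^ q = Polynomial.eval y f * x ^ q) ∧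
      ¬ (∀ x y : F, x ≠ 0 → y ≠ 0 →
          Polynomial.eval x f * y ^ q = Polynomial.eval y f * x ^ q →
          (y / x) ^ q = y / x) := by
  suffices h : ∃ x y : F, x ≠ 0 ∧ y ≠ 0 ∧ (y / x) ^ q ≠ y / x ∧
      Polynomial.eval x f * y ^ q = Polynomial.eval y f * x ^ q by
    refine ⟨h, fun hall => ?_⟩
    obtain ⟨x, y, hx, hy, hxy, he⟩ := h
    exact hxy (hall x y hx hy he)
  have := Fact.mk hp
  have hchar : CharP F p := by
    refine charP_of_card_eq_prime_pow (f := r * n) ?_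
    rw [hF, hq, pow_mul]
  have hq1 : 2 ≤ q := Scat.two_le_q hr hq
  obtain ⟨t, x, ht, hx, hsol⟩ := Scat.exists_solution hq hr hk hkn hF
    (b := fun i => if i = k then lam else α i) (by simpa using hlam)
  have ht0 : t ≠ 0 := by
    rintro rfl
    exact ht (zero_pow (by omega))
  have hev : ∀ w : F, Polynomial.eval w f = w + α 1 * w ^ q +
      ∑ i ∈ Finset.Icc 2 k, (if i = k then lam else α i) * w ^ q ^ i := by
    intro w
    have h1 : Finset.Icc 2 k = insert k (Finset.Ico 2 k) := by
      ext i
      simp only [Finset.mem_Icc, Finset.mem_insert, Finset.mem_Ico]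
      omega
    rw [h1, Finset.sum_insert (by simp), if_pos rfl, hfdef, hφ,
      Finset.sum_eq_sum_Ico_succ_bot (by omega : 1 < k)]
    have h2 : ∑ i ∈ Finset.Ico 2 k, (if i = k then lam else α i) * w ^ q ^ i =
        ∑ i ∈ Finset.Ico 2 k, α i * w ^ q ^ i := by
      refine Finset.sum_congr rfl fun i hi => ?_
      rw [if_neg (Finset.mem_Ico.1 hi).2.ne]
    rw [h2]
    simp [Polynomial.eval_finsetSum]
    ring
  refine ⟨x, t * x, hx, mul_ne_zero ht0 hx, by rwa [mul_div_cancel_right₀ _ hx], ?_⟩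
  have h3 : t ^ q * ∑ i ∈ Finset.Icc 2 k, (if i = k then lam else α i) * x ^ q ^ i +
      x * (t ^ q - t) =
      ∑ i ∈ Finset.Icc 2 k, (if i = k then lam else α i) * (t * x) ^ q ^ i := by
    rw [hsol, Finset.mul_sum, ← Finset.sum_add_distrib]
    refine Finset.sum_congr rfl fun i _ => ?_
    rw [mul_pow]
    ring
  rw [hev, hev, ← h3, mul_pow]
  ring
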